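/- Let φ₁, φ₂ be GF²-sentences and Σ a signature. Then φ₁ ⊨_Σ φ₂ if and only if for every regular forest model 𝔄 of φ₁ that has finite outdegree there is a model 𝔅 of φ₂ such that: (1) for every a ∈ A there is b ∈ B with (𝔄,a) ∼_Σ (𝔅,b); and (2) for every b ∈ B, either (a) there is a ∈ A with (𝔄,a) ∼_Σ (𝔅,b), or (b) there are elements a_⊥, a₀, a₁, … and a'₀, a'₁, … of A such that a_⊥ ≺ a₀ ≺ a₁ ≺ ⋯ and, for all i ≥ 0, a_i ≺ a'_i and (𝔄,a'_i) ∼^{a_⊥}_Σ (𝔅,b). -/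

import Mathlib

/-! Core: relational two-variable first-order logic with equality (unary and
binary predicates only), the guarded fragment GF², structures, satisfaction,
atomic types, (bounded/delimited) guarded bisimulations, forest structures. -/

namespace GFC

inductive Var : Type
  | x
  | y
deriving DecidableEq

/-- Formulas of two-variable relational FO with equality (variables `x`, `y`). -/
inductive Fml (U B : Type) : Type
  | uatom : U → Var → Fml U B
  | batom : B → Var → Var → Fml U B
  | eqv   : Var → Var → Fml U B
  | fls   : Fml U B
  | neg   : Fml U B → Fml U B
  | conj  : Fml U B → Fml U B → Fml U B
  | disj  : Fml U B → Fml U B → Fml U B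
  | impl  : Fml U B → Fml U B → Fml U B
  | all   : Var → Fml U B → Fml U B
  | ex    : Var → Fml U B → Fml U B

namespace Fml

variable {U B : Type}

def free : Fml U B → Set Var
  | uatom _ v => {v}
  | batom _ v w => {v, w}
  | eqv v w => {v, w}
  | fls => ∅
  | neg φ => φ.free
  | conj φ ψ => φ.free ∪ ψ.free
  | disj φ ψ => φ.free ∪ ψ.free
  | impl φ ψ => φ.free ∪ ψ.free
  | all v φ => φ.free \ {v}
  | ex v φ => φ.free \ {v}

def IsSentence (φ : Fml U B) : Prop := φ.free = ∅

def upreds : Fml U B → Set U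
  | uatom P _ => {P}
  | batom _ _ _ => ∅
  | eqv _ _ => ∅
  | fls => ∅
  | neg φ => φ.upreds
  | conj φ ψ => φ.upreds ∪ ψ.upreds
  | disj φ ψ => φ.upreds ∪ ψ.upreds
  | impl φ ψ => φ.upreds ∪ ψ.upreds
  | all _ φ => φ.upreds
  | ex _ φ => φ.upreds

def bpreds : Fml U B → Set B
  | uatom _ _ => ∅
  | batom R _ _ => {R}
  | eqv _ _ => ∅
  | fls => ∅
  | neg φ => φ.bpreds
  | conj φ ψ => φ.bpreds ∪ ψ.bpreds
  | disj φ ψ => φ.bpreds ∪ ψ.bpreds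
  | impl φ ψ => φ.bpreds ∪ ψ.bpreds
  | all _ φ => φ.bpreds
  | ex _ φ => φ.bpreds

def IsAtom : Fml U B → Prop
  | uatom _ _ => True
  | batom _ _ _ => True
  | eqv _ _ => True
  | _ => False

def IsEqAtom : Fml U B → Prop
  | eqv _ _ => True
  | _ => False

/-- guarded quantifier depth (in GF² formulas every quantifier is guarded) -/
def gdepth : Fml U B → ℕ
  | uatom _ _ => 0
  | batom _ _ _ => 0
  | eqv _ _ => 0
  | fls => 0
  | neg φ => φ.gdepth
  | conj φ ψ => max φ.gdepth ψ.gdepth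
  | disj φ ψ => max φ.gdepth ψ.gdepth
  | impl φ ψ => max φ.gdepth ψ.gdepth
  | all _ φ => φ.gdepth + 1
  | ex _ φ => φ.gdepth + 1

/-- subformulas (including the formula itself) -/
def Subf : Fml U B → Set (Fml U B)
  | uatom P v => {uatom P v}
  | batom R v w => {batom R v w}
  | eqv v w => {eqv v w}
  | fls => {fls}
  | neg φ => insert (neg φ) φ.Subf
  | conj φ ψ => insert (conj φ ψ) (φ.Subf ∪ ψ.Subf)
  | disj φ ψ => insert (disj φ ψ) (φ.Subf ∪ ψ.Subf)
  | impl φ ψ => insert (impl φ ψ) (φ.Subf ∪ ψ.Subf)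
  | all v φ => insert (all v φ) φ.Subf
  | ex v φ => insert (ex v φ) φ.Subf

/-- rename the free variables along `f` (bound variables untouched) -/
def renameFree : (Var → Var) → Fml U B → Fml U B
  | f, uatom P v => uatom P (f v)
  | f, batom R v w => batom R (f v) (f w)
  | f, eqv v w => eqv (f v) (f w)
  | _, fls => fls
  | f, neg φ => neg (renameFree f φ)
  | f, conj φ ψ => conj (renameFree f φ) (renameFree f ψ)
  | f, disj φ ψ => disj (renameFree f φ) (renameFree f ψ)
  | f, impl φ ψ => impl (renameFree f φ) (renameFree f ψ)
  | f, all v φ => all v (renameFree (Function.update f v v) φ)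
  | f, ex v φ => ex v (renameFree (Function.update f v v) φ)

end Fml

/-- The two-variable guarded fragment GF²: quantification only in the guarded
patterns `∀v (α → φ)` and `∃v (α ∧ φ)` with `α` an atom containing all free
variables of `φ` as well as the quantified variable `v`. -/
inductive IsGF2 {U B : Type} : Fml U B → Prop
  | uatom (P : U) (v : Var) : IsGF2 (.uatom P v)
  | batom (R : B) (v w : Var) : IsGF2 (.batom R v w)
  | eqv (v w : Var) : IsGF2 (.eqv v w)
  | fls : IsGF2 .fls
  | neg {φ} : IsGF2 φ → IsGF2 (.neg φ)
  | conj {φ ψ} : IsGF2 φ → IsGF2 ψ → IsGF2 (.conj φ ψ)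
  | disj {φ ψ} : IsGF2 φ → IsGF2 ψ → IsGF2 (.disj φ ψ)
  | impl {φ ψ} : IsGF2 φ → IsGF2 ψ → IsGF2 (.impl φ ψ)
  | allG {v : Var} {α φ : Fml U B} :
      α.IsAtom → IsGF2 φ → φ.free ∪ {v} ⊆ α.free → IsGF2 (.all v (.impl α φ))
  | exG {v : Var} {α φ : Fml U B} :
      α.IsAtom → IsGF2 φ → φ.free ∪ {v} ⊆ α.free → IsGF2 (.ex v (.conj α φ))

/-- openGF²: GF² formulas with exactly one free variable, in which equality is
never used as a guard and which contain no subformula that is a sentence. -/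
def IsOpenGF2 {U B : Type} (φ : Fml U B) : Prop :=
  IsGF2 φ ∧ (∃ v, φ.free = {v}) ∧
  (∀ ψ ∈ φ.Subf, ¬ ψ.IsSentence) ∧
  (∀ ψ ∈ φ.Subf, ∀ (v : Var) (α χ : Fml U B),
      (ψ = .all v (.impl α χ) ∨ ψ = .ex v (.conj α χ)) → ¬ α.IsEqAtom)

/-- relational structures interpreting unary predicates `U` and binary
predicates `B` -/
structure Str (U B : Type) where
  Dom : Type
  nonempty : Nonempty Dom
  u : U → Dom → Prop
  b : B → Dom → Dom → Prop

def upd {D : Type} (σ : Var → D) (v : Var) (d : D) : Var → D :=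
  fun w => if w = v then d else σ w

def Sat {U B : Type} (A : Str U B) : Fml U B → (Var → A.Dom) → Prop
  | .uatom P v, σ => A.u P (σ v)
  | .batom R v w, σ => A.b R (σ v) (σ w)
  | .eqv v w, σ => σ v = σ w
  | .fls, _ => False
  | .neg φ, σ => ¬ Sat A φ σ
  | .conj φ ψ, σ => Sat A φ σ ∧ Sat A ψ σ
  | .disj φ ψ, σ => Sat A φ σ ∨ Sat A ψ σ
  | .impl φ ψ, σ => Sat A φ σ → Sat A ψ σ
  | .all v φ, σ => ∀ d : A.Dom, Sat A φ (upd σ v d)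
  | .ex v φ, σ => ∃ d : A.Dom, Sat A φ (upd σ v d)

/-- truth of a sentence in a structure -/
def SatS {U B : Type} (A : Str U B) (φ : Fml U B) : Prop := ∀ σ, Sat A φ σ

def Entails {U B : Type} (φ ψ : Fml U B) : Prop :=
  ∀ A : Str U B, SatS A φ → SatS A ψ

def Satisfiable {U B : Type} (φ : Fml U B) : Prop := ∃ A : Str U B, SatS A φ

/-- a GF²(Σ)-sentence, for the signature Σ = (SU, SB) -/
def IsGF2Sentence {U B : Type} (SU : Set U) (SB : Set B) (ψ : Fml U B) : Prop :=
  IsGF2 ψ ∧ ψ.IsSentence ∧ ψ.upreds ⊆ SU ∧ ψ.bpreds ⊆ SB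

/-- `φ₁ ⊨_Σ φ₂` : GF²(Σ)-entailment -/
def GF2Entails {U B : Type} (SU : Set U) (SB : Set B) (φ₁ φ₂ : Fml U B) : Prop :=
  ∀ ψ : Fml U B, IsGF2Sentence SU SB ψ → Entails φ₂ ψ → Entails φ₁ ψ

/-- atomic formulas in the variables x, y -/
inductive Atom2 (U B : Type) : Type
  | ua : U → Var → Atom2 U B
  | ba : B → Var → Var → Atom2 U B

def vval {D : Type} (a a' : D) : Var → D
  | .x => a
  | .y => a'

def Atom2.inSig {U B : Type} (SU : Set U) (SB : Set B) : Atom2 U B → Prop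
  | .ua P _ => P ∈ SU
  | .ba R _ _ => R ∈ SB

def Atom2.holds {U B : Type} (A : Str U B) (a a' : A.Dom) : Atom2 U B → Prop
  | .ua P v => A.u P (vval a a' v)
  | .ba R v w => A.b R (vval a a' v) (vval a a' w)

def Atom2.onlyX {U B : Type} : Atom2 U B → Prop
  | .ua _ v => v = Var.x
  | .ba _ v w => v = Var.x ∧ w = Var.x

/-- the atomic 1-type of `a` for the signature `(SU, SB)` (the set of
Σ-atoms in the single variable x satisfied by `a`; this determines the set of
negated atoms as well) -/
def atp1 {U B : Type} (A : Str U B) (SU : Set U) (SB : Set B) (a : A.Dom) :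
    Set (Atom2 U B) :=
  {α | α.onlyX ∧ α.inSig SU SB ∧ α.holds A a a}

/-- the atomic 2-type of `(a, a')` for the signature `(SU, SB)` (the set of
Σ-atoms in x, y satisfied by `(a, a')`; together with `a ≠ a'` this determines
the atomic 2-type) -/
def atp2 {U B : Type} (A : Str U B) (SU : Set U) (SB : Set B) (a a' : A.Dom) :
    Set (Atom2 U B) :=
  {α | α.inSig SU SB ∧ α.holds A a a'}

/-- the atomic 2-type of `(a, a')` is guarded (contains `R x y` or `R y x`
for some binary `R ∈ SB`) -/
def Guarded2 {U B : Type} (A : Str U B) (SB : Set B) (a a' : A.Dom) : Prop :=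
  ∃ R ∈ SB, A.b R a a' ∨ A.b R a' a

/-- GF²(Σ)-bisimulation between structures `A` and `Bm` -/
structure IsBisim {U B : Type} (A Bm : Str U B) (SU : Set U) (SB : Set B)
    (Z : A.Dom → Bm.Dom → Prop) : Prop where
  atom_eq : ∀ {a b}, Z a b → atp1 A SU SB a = atp1 Bm SU SB b
  forth : ∀ {a b}, Z a b → ∀ a', a' ≠ a → Guarded2 A SB a a' →
      ∃ b', b' ≠ b ∧ atp2 A SU SB a a' = atp2 Bm SU SB b b' ∧ Z a' b'
  back : ∀ {a b}, Z a b → ∀ b', b' ≠ b → Guarded2 Bm SB b b' →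
      ∃ a', a' ≠ a ∧ atp2 A SU SB a a' = atp2 Bm SU SB b b' ∧ Z a' b'

/-- `(A, a) ∼_Σ (Bm, b)` -/
def Bisim {U B : Type} (A Bm : Str U B) (SU : Set U) (SB : Set B)
    (a : A.Dom) (b : Bm.Dom) : Prop :=
  ∃ Z, IsBisim A Bm SU SB Z ∧ Z a b

/-- `(A, a) ∼ᵏ_Σ (Bm, b)` : k-GF²(Σ)-bisimilarity -/
def KBisim {U B : Type} (A Bm : Str U B) (SU : Set U) (SB : Set B) :
    ℕ → A.Dom → Bm.Dom → Prop
  | 0, a, b => atp1 A SU SB a = atp1 Bm SU SB b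
  | k+1, a, b => atp1 A SU SB a = atp1 Bm SU SB b ∧
      (∀ a', a' ≠ a → Guarded2 A SB a a' →
        ∃ b', b' ≠ b ∧ atp2 A SU SB a a' = atp2 Bm SU SB b b' ∧
          KBisim A Bm SU SB k a' b') ∧
      (∀ b', b' ≠ b → Guarded2 Bm SB b b' →
        ∃ a', a' ≠ a ∧ atp2 A SU SB a a' = atp2 Bm SU SB b b' ∧
          KBisim A Bm SU SB k a' b')

/-- a (full-signature) atomic 2-type, given as its set of positive atoms,
is guarded -/
def Guarded2Type {U B : Type} (τ : Set (Atom2 U B)) : Prop :=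
  ∃ R : B, Atom2.ba R Var.x Var.y ∈ τ ∨ Atom2.ba R Var.y Var.x ∈ τ

/-- successor-saturated structures -/
def SuccSaturated {U B : Type} (A : Str U B) : Prop :=
  ∀ (a : A.Dom) (τ : Set (Atom2 U B)) (Γ : Set (Fml U B)),
    Guarded2Type τ →
    (∀ ψ ∈ Γ, IsOpenGF2 ψ ∧ ψ.free = {Var.x}) →
    (∀ Γ' : Finset (Fml U B), ↑Γ' ⊆ Γ →
      ∃ a', a' ≠ a ∧ atp2 A Set.univ Set.univ a a' = τ ∧
        ∀ ψ ∈ Γ', Sat A ψ (fun _ => a')) →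
    ∃ b', b' ≠ a ∧ atp2 A Set.univ Set.univ a b' = τ ∧
      ∀ ψ ∈ Γ, Sat A ψ (fun _ => b')

/-- finite outdegree: every element stands in a guarded atomic 2-type (for the
full signature) to only finitely many elements -/
def FiniteOutdeg {U B : Type} (A : Str U B) : Prop :=
  ∀ a : A.Dom, {a' | a' ≠ a ∧ ∃ R : B, A.b R a a' ∨ A.b R a' a}.Finite

/-- Σ-adjacency (edges of the Gaifman graph of the Σ-reduct) -/
def SigAdj {U B : Type} (A : Str U B) (SB : Set B) (a a' : A.Dom) : Prop :=
  a ≠ a' ∧ ∃ R ∈ SB, A.b R a a' ∨ A.b R a' a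

/-- A forest structure: a structure whose Gaifman graph is a forest, directed
by choosing a root for each tree; `parent p c` says that `p` is the
predecessor (parent) of `c`. -/
structure Forest (U B : Type) extends Str U B where
  parent : Dom → Dom → Prop
  parent_unique : ∀ {c p p' : Dom}, parent p c → parent p' c → p = p'
  parent_wf : WellFounded parent
  adj_iff : ∀ a a' : Dom,
    (a ≠ a' ∧ ∃ R : B, b R a a' ∨ b R a' a) ↔ (parent a a' ∨ parent a' a)

namespace Forest

variable {U B : Type}

/-- `a` together with its descendants -/
def desc (F : Forest U B) (a : F.Dom) : Set F.Dom :=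
  {c | Relation.ReflTransGen F.parent a c}

/-- the subtrees rooted at `a` and at `a'` are isomorphic -/
def SubtreeIso (F : Forest U B) (a a' : F.Dom) : Prop :=
  ∃ f : (F.desc a) ≃ (F.desc a'),
    (f ⟨a, Relation.ReflTransGen.refl⟩).val = a' ∧
    (∀ c d : F.desc a, F.parent c.val d.val ↔ F.parent (f c).val (f d).val) ∧
    (∀ (P : U) (c : F.desc a), F.u P c.val ↔ F.u P (f c).val) ∧
    (∀ (R : B) (c d : F.desc a), F.b R c.val d.val ↔ F.b R (f c).val (f d).val)

/-- regular: only finitely many subtrees up to isomorphism -/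
def Regular (F : Forest U B) : Prop :=
  ∃ S : Set F.Dom, S.Finite ∧ ∀ a, ∃ a' ∈ S, F.SubtreeIso a' a

/-- `a ≺ a'` : `a` and `a'` lie in the same Σ-tree and `a` is a proper
ancestor of `a'` -/
def prec (F : Forest U B) (SB : Set B) (a a' : F.Dom) : Prop :=
  Relation.ReflTransGen (SigAdj F.toStr SB) a a' ∧ Relation.TransGen F.parent a a'

end Forest

/-- `a_⊥`-delimited GF²(Σ)-bisimulation: like a GF²(Σ)-bisimulation except that
the back-and-forth conditions are not required at pairs whose first component
is `abot` -/
structure IsPtDelimBisim {U B : Type} (A Bm : Str U B) (SU : Set U) (SB : Set B)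
    (abot : A.Dom) (Z : A.Dom → Bm.Dom → Prop) : Prop where
  atom_eq : ∀ {a b}, Z a b → atp1 A SU SB a = atp1 Bm SU SB b
  forth : ∀ {a b}, Z a b → a ≠ abot → ∀ a', a' ≠ a → Guarded2 A SB a a' →
      ∃ b', b' ≠ b ∧ atp2 A SU SB a a' = atp2 Bm SU SB b b' ∧ Z a' b'
  back : ∀ {a b}, Z a b → a ≠ abot → ∀ b', b' ≠ b → Guarded2 Bm SB b b' →
      ∃ a', a' ≠ a ∧ atp2 A SU SB a a' = atp2 Bm SU SB b b' ∧ Z a' b'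

/-- `(A, a) ∼^{a_⊥}_Σ (Bm, b)` -/
def PtDelimBisim {U B : Type} (A Bm : Str U B) (SU : Set U) (SB : Set B)
    (abot : A.Dom) (a : A.Dom) (b : Bm.Dom) : Prop :=
  ∃ Z, IsPtDelimBisim A Bm SU SB abot Z ∧ Z a b

/-- `A_⊥`-delimited GF²(Σ)-bisimulation between a forest structure `F` and a
structure `Bm`, given by a pair of relations `Z0 (∼⁰)` and `Z1 (∼¹)`. -/
structure IsDelimBisim {U B : Type} (F : Forest U B) (Bm : Str U B)
    (SU : Set U) (SB : Set B) (Abot : Set F.Dom)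
    (Z0 Z1 : F.Dom → Bm.Dom → Prop) : Prop where
  zero : ∀ {a b}, Z0 a b →
    atp1 F.toStr SU SB a = atp1 Bm SU SB b ∧
    (∀ a', a' ≠ a → Guarded2 F.toStr SB a a' →
      ∃ b', b' ≠ b ∧
        ((F.parent a' a ∧ a' ∈ Abot) → Z1 a' b') ∧
        (¬ (F.parent a' a ∧ a' ∈ Abot) → Z0 a' b')) ∧
    (∀ b', b' ≠ b → Guarded2 Bm SB b b' →
      ∃ a', a' ≠ a ∧
        ((F.parent a' a ∧ a' ∈ Abot) → Z1 a' b') ∧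
        (¬ (F.parent a' a ∧ a' ∈ Abot) → Z0 a' b'))
  one : ∀ {a b}, Z1 a b → (∀ p, F.parent p a → p ∉ Abot) →
    atp1 F.toStr SU SB a = atp1 Bm SU SB b ∧
    (∀ a', a' ≠ a → Guarded2 F.toStr SB a a' →
      ∃ b', b' ≠ b ∧
        ((F.parent a a' ∧ a ∈ Abot) → Z0 a' b') ∧
        (¬ (F.parent a a' ∧ a ∈ Abot) → Z1 a' b')) ∧
    (∀ b', b' ≠ b → Guarded2 Bm SB b b' →
      ∃ a', a' ≠ a ∧
        ((F.parent a a' ∧ a ∈ Abot) → Z0 a' b') ∧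
        (¬ (F.parent a a' ∧ a ∈ Abot) → Z1 a' b'))

/-- `(F, a) ∼^{A_⊥}_Σ (Bm, b)` -/
def DelimBisim {U B : Type} (F : Forest U B) (Bm : Str U B)
    (SU : Set U) (SB : Set B) (Abot : Set F.Dom) (a : F.Dom) (b : Bm.Dom) : Prop :=
  ∃ Z0 Z1, IsDelimBisim F Bm SU SB Abot Z0 Z1 ∧ Z0 a b

/-- `cl φ` : the subformulas of `φ` closed under single negation and renaming
of free variables (among x, y) -/
def clSet {U B : Type} (φ : Fml U B) : Set (Fml U B) :=
  {χ | ∃ ψ ∈ φ.Subf, ∃ f : Var → Var,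
      χ = ψ.renameFree f ∨ χ = .neg (ψ.renameFree f)}

/-- a 1-type for `φ₂`: a set of formulas `ψ(x)` from `cl φ₂` such that
`φ₂ ∧ ∃x ⋀ t(x)` is satisfiable -/
def OneType {U B : Type} (φ₂ : Fml U B) (t : Set (Fml U B)) : Prop :=
  t ⊆ clSet φ₂ ∧ (∀ ψ ∈ t, ψ.free ⊆ {Var.x}) ∧
  ∃ (A : Str U B) (a : A.Dom), SatS A φ₂ ∧ ∀ ψ ∈ t, Sat A ψ (fun _ => a)

/-- `tp_Bm(b)` : the 1-type of `b` in `Bm` (w.r.t. `φ₂`) -/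
def tpOf {U B : Type} (Bm : Str U B) (φ₂ : Fml U B) (b : Bm.Dom) :
    Set (Fml U B) :=
  {ψ | ψ ∈ clSet φ₂ ∧ ψ.free ⊆ {Var.x} ∧ Sat Bm ψ (fun _ => b)}

end GFC

/-!
For the direction from right to left, suppose that `φ₁ ∧ ¬ψ` is satisfiable where `ψ` is a
GF²(Σ)-consequence of `φ₂`. Unravelling a model, with one representative for each of the finitely
many patterns of truth values of subformulas, gives a regular forest model of finite outdegree. Its
match `𝔅 ⊨ φ₂` is `k`-bisimilar to it for every `k`: in case (2)(b), `k` rounds starting from `a'_k`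
cannot climb up to the exempted element `a_⊥`. So `𝔅 ⊨ ¬ψ`, a contradiction to
`φ₂ ⊨ ψ`.

For the direction from left to right, let `𝔄` be a regular forest model of `φ₁` of finite
outdegree. Since Σ is finite, `k`-bisimilarity to `𝔄` is expressed by a GF²(Σ)-sentence, so
entailment yields models `C n` of `φ₂` that are `n`-bisimilar to `𝔄`, and `𝔅` is their ultraproduct.
Saturation of `𝔅` and finite outdegree of `𝔄` turn agreement for all `k` in the limit into genuine
bisimulations. An element `b` of `𝔅` is a limit of elements `a n` of `𝔄`. If the depth of `a n` in
its Σ-tree stays bounded, regularity makes the Σ-trees of almost all `a n` isomorphic, which gives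
case (2)(a). Otherwise, for every `N`, the subtree rooted `N` levels above `a n` is isomorphic, for
almost all `n`, to a fixed one of finitely many subtrees, and the copy of `a n` is bisimilar to `b`
when its root is exempted. By the pigeonhole principle one root `a_⊥` serves infinitely many `N`,
and König's lemma yields the chain of case (2)(b).
-/

namespace GFC

section

/-! ### Atomic types -/

variable {U B : Type} {A M : Str U B} {SU : Set U} {SB : Set B}

theorem atp1_eq_iff {a : A.Dom} {m : M.Dom} :
    atp1 A SU SB a = atp1 M SU SB m ↔
      (∀ P ∈ SU, (A.u P a ↔ M.u P m)) ∧ ∀ R ∈ SB, (A.b R a a ↔ M.b R m m) := by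
  constructor
  · intro h
    refine ⟨fun P hP => ?_, fun R hR => ?_⟩
    · simpa [atp1, Atom2.onlyX, Atom2.inSig, Atom2.holds, vval, hP]
        using Set.ext_iff.1 h (Atom2.ua P .x)
    · simpa [atp1, Atom2.onlyX, Atom2.inSig, Atom2.holds, vval, hR]
        using Set.ext_iff.1 h (Atom2.ba R .x .x)
  · rintro ⟨hu, hb⟩
    ext (⟨P, v⟩ | ⟨R, v, w⟩)
    · cases v <;> simp +contextual [atp1, Atom2.onlyX, Atom2.inSig, Atom2.holds, vval, hu]
    · cases v <;> cases w <;>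
        simp +contextual [atp1, Atom2.onlyX, Atom2.inSig, Atom2.holds, vval, hb]

theorem atp2_eq_iff {a a' : A.Dom} {m m' : M.Dom} :
    atp2 A SU SB a a' = atp2 M SU SB m m' ↔
      atp1 A SU SB a = atp1 M SU SB m ∧ atp1 A SU SB a' = atp1 M SU SB m' ∧
        ∀ R ∈ SB, (A.b R a a' ↔ M.b R m m') ∧ (A.b R a' a ↔ M.b R m' m) := by
  simp only [atp1_eq_iff]
  constructor
  · intro h
    have hu (v) : ∀ P ∈ SU, (A.u P (vval a a' v) ↔ M.u P (vval m m' v)) := fun P hP => by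
      simpa [atp2, Atom2.inSig, Atom2.holds, hP] using Set.ext_iff.1 h (Atom2.ua P v)
    have hb (v w) : ∀ R ∈ SB,
        (A.b R (vval a a' v) (vval a a' w) ↔ M.b R (vval m m' v) (vval m m' w)) := fun R hR => by
      simpa [atp2, Atom2.inSig, Atom2.holds, hR] using Set.ext_iff.1 h (Atom2.ba R v w)
    exact ⟨⟨hu .x, hb .x .x⟩, ⟨hu .y, hb .y .y⟩, fun R hR => ⟨hb .x .y R hR, hb .y .x R hR⟩⟩
  · rintro ⟨⟨hux, hbx⟩, ⟨huy, hby⟩, hxy⟩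
    ext (⟨P, v⟩ | ⟨R, v, w⟩)
    · cases v <;> simp +contextual [atp2, Atom2.inSig, Atom2.holds, vval, hux, huy]
    · cases v <;> cases w <;>
        simp +contextual [atp2, Atom2.inSig, Atom2.holds, vval, hbx, hby, hxy]

theorem atp2_swap_eq_of_atp2_eq {a a' : A.Dom} {m m' : M.Dom}
    (h : atp2 A SU SB a a' = atp2 M SU SB m m') : atp2 A SU SB a' a = atp2 M SU SB m' m := by
  rw [atp2_eq_iff] at h ⊢
  exact ⟨h.2.1, h.1, fun R hR => (h.2.2 R hR).symm⟩

theorem guarded2_iff_of_atp2_eq {a a' : A.Dom} {m m' : M.Dom}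
    (h : atp2 A SU SB a a' = atp2 M SU SB m m') : Guarded2 A SB a a' ↔ Guarded2 M SB m m' :=
  have hb := (atp2_eq_iff.1 h).2.2
  exists_congr fun R => and_congr_right fun hR => or_congr (hb R hR).1 (hb R hR).2

theorem Guarded2.symm {a a' : A.Dom} (h : Guarded2 A SB a a') : Guarded2 A SB a' a :=
  h.imp fun _ hR => hR.imp_right Or.symm

/-! ### Satisfaction -/

instance (A : Str U B) : Nonempty A.Dom := A.nonempty

instance : Finite Var :=
  .of_injective (fun v => (v : Var) = .x) fun v w => by cases v <;> cases w <;> simp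

theorem Var.eq_or_eq {v w : Var} (hwv : w ≠ v) (u : Var) : u = v ∨ u = w := by
  cases u <;> cases v <;> cases w <;> simp_all

@[simp]
theorem upd_self {D : Type} (σ : Var → D) (v : Var) (d : D) : upd σ v d v = d :=
  if_pos rfl

theorem upd_of_ne {D : Type} (σ : Var → D) {v w : Var} (h : w ≠ v) (d : D) :
    upd σ v d w = σ w :=
  if_neg h

theorem sat_congr {φ : Fml U B} {σ τ : Var → A.Dom} (h : ∀ v ∈ φ.free, σ v = τ v) :
    Sat A φ σ ↔ Sat A φ τ := by
  have upd_eq {v : Var} {φ : Fml U B} {σ τ : Var → A.Dom} (h : ∀ w ∈ φ.free \ {v}, σ w = τ w)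
      (d : A.Dom) : ∀ w ∈ φ.free, upd σ v d w = upd τ v d w := by
    intro w hw
    by_cases hwv : w = v
    · simp [hwv]
    · simpa only [upd_of_ne _ hwv] using h w ⟨hw, hwv⟩
  induction φ generalizing σ τ with
  | uatom P v => simp only [Sat, h v rfl]
  | batom R v w | eqv v w => simp only [Sat, h v (Or.inl rfl), h w (Or.inr rfl)]
  | fls => rfl
  | neg φ ih => exact not_congr (ih h)
  | conj φ ψ ihφ ihψ =>
    exact and_congr (ihφ fun v hv => h v (Or.inl hv)) (ihψ fun v hv => h v (Or.inr hv))
  | disj φ ψ ihφ ihψ =>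
    exact or_congr (ihφ fun v hv => h v (Or.inl hv)) (ihψ fun v hv => h v (Or.inr hv))
  | impl φ ψ ihφ ihψ =>
    exact imp_congr (ihφ fun v hv => h v (Or.inl hv)) (ihψ fun v hv => h v (Or.inr hv))
  | all v φ ih => exact forall_congr' fun d => ih (upd_eq h d)
  | ex v φ ih => exact exists_congr fun d => ih (upd_eq h d)

theorem satS_iff_sat {φ : Fml U B} (hφ : φ.IsSentence) (σ : Var → A.Dom) :
    SatS A φ ↔ Sat A φ σ :=
  ⟨fun h => h σ, fun h _ => (sat_congr (hφ ▸ fun _ hv => hv.elim)).1 h⟩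

theorem satS_neg_iff {φ : Fml U B} (hφ : φ.IsSentence) : SatS A (.neg φ) ↔ ¬ SatS A φ := by
  obtain ⟨d⟩ := A.nonempty
  rw [satS_iff_sat hφ fun _ => d, satS_iff_sat (φ := .neg φ) hφ fun _ => d]
  rfl

theorem sat_all_impl_iff {v : Var} {α φ : Fml U B} {σ : Var → A.Dom} :
    Sat A (.all v (.impl α φ)) σ ↔ ¬ Sat A (.ex v (.conj α (.neg φ))) σ := by
  simp [Sat]

/-- `χ` semantically guards its free variables in `SB`: whenever it holds, distinct values of its
free variables are related by a predicate in `SB`. -/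
def SemGuarded (SB : Set B) (χ : Fml U B) : Prop :=
  ∀ (C : Str U B) (σ : Var → C.Dom), Sat C χ σ →
    ∀ v ∈ χ.free, ∀ w ∈ χ.free, σ w ≠ σ v → Guarded2 C SB (σ v) (σ w)

theorem semGuarded_of_isAtom {α : Fml U B} (hα : α.IsAtom) (hb : α.bpreds ⊆ SB) :
    SemGuarded SB α := by
  intro C σ h v hv w hw hne
  have hvw : v ≠ w := fun hvw => hne (hvw ▸ rfl)
  cases α with
  | uatom P u => exact (hvw (hv.trans hw.symm)).elim
  | batom R u u' =>
    refine ⟨R, hb rfl, ?_⟩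
    rcases hv with rfl | rfl <;> rcases hw with rfl | rfl
    exacts [(hvw rfl).elim, Or.inl h, Or.inr h, (hvw rfl).elim]
  | eqv u u' =>
    rcases hv with rfl | rfl <;> rcases hw with rfl | rfl
    exacts [(hvw rfl).elim, (hne h.symm).elim, (hne h).elim, (hvw rfl).elim]
  | _ => exact hα.elim

theorem SemGuarded.conj {α φ : Fml U B} (hα : SemGuarded SB α) (hφ : φ.free ⊆ α.free) :
    SemGuarded SB (.conj α φ) := fun C σ h v hv w hw =>
  hα C σ h.1 v (hv.elim id (hφ ·)) w (hw.elim id (hφ ·))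

namespace Fml

theorem self_mem_subf (φ : Fml U B) : φ ∈ φ.Subf := by
  cases φ <;> simp [Subf]

theorem subf_subset {φ ψ : Fml U B} (h : φ ∈ ψ.Subf) : φ.Subf ⊆ ψ.Subf := by
  induction ψ <;>
    simp only [Subf, Set.mem_insert_iff, Set.mem_singleton_iff, Set.mem_union] at h <;>
    grind [Subf]

theorem upreds_subset {φ ψ : Fml U B} (h : φ ∈ ψ.Subf) : φ.upreds ⊆ ψ.upreds := by
  induction ψ <;>
    simp only [Subf, Set.mem_insert_iff, Set.mem_singleton_iff, Set.mem_union] at h <;>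
    grind [upreds]

theorem bpreds_subset {φ ψ : Fml U B} (h : φ ∈ ψ.Subf) : φ.bpreds ⊆ ψ.bpreds := by
  induction ψ <;>
    simp only [Subf, Set.mem_insert_iff, Set.mem_singleton_iff, Set.mem_union] at h <;>
    grind [bpreds]

theorem gdepth_le {φ ψ : Fml U B} (h : φ ∈ ψ.Subf) : φ.gdepth ≤ ψ.gdepth := by
  induction ψ <;>
    simp only [Subf, Set.mem_insert_iff, Set.mem_singleton_iff, Set.mem_union] at h <;>
    grind [gdepth]

end Fml

end

section

/-! ### Preservation of guarded formulas -/

variable {U B : Type} {A M : Str U B} {SU : Set U} {SB : Set B}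

/-- The assignments `σ` into `A` and `τ` into `M` satisfy the same formulas from `Γ`. -/
def AgreeOn (A M : Str U B) (Γ : Set (Fml U B)) (σ : Var → A.Dom) (τ : Var → M.Dom) : Prop :=
  ∀ ψ ∈ Γ, (Sat A ψ σ ↔ Sat M ψ τ)

namespace AgreeOn

variable {N : Str U B} {Γ : Set (Fml U B)} {σ : Var → A.Dom} {τ : Var → M.Dom} {υ : Var → N.Dom}

theorem refl (σ : Var → A.Dom) : AgreeOn A A Γ σ σ := fun _ _ => .rfl

theorem symm (h : AgreeOn A M Γ σ τ) : AgreeOn M A Γ τ σ := fun ψ hψ => (h ψ hψ).symm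

theorem trans (h : AgreeOn A M Γ σ τ) (h' : AgreeOn M N Γ τ υ) : AgreeOn A N Γ σ υ :=
  fun ψ hψ => (h ψ hψ).trans (h' ψ hψ)

theorem atp1_eq {a : A.Dom} {m : M.Dom} (hU : ∀ P ∈ SU, ∃ v, .uatom P v ∈ Γ)
    (hB : ∀ R ∈ SB, ∃ v w, .batom R v w ∈ Γ) (h : AgreeOn A M Γ (fun _ => a) fun _ => m) :
    atp1 A SU SB a = atp1 M SU SB m := by
  refine atp1_eq_iff.2 ⟨fun P hP => ?_, fun R hR => ?_⟩
  · obtain ⟨v, hv⟩ := hU P hP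
    exact h _ hv
  · obtain ⟨v, w, hvw⟩ := hB R hR
    exact h _ hvw

end AgreeOn

/-- A decreasing family `Z k` of global relations with back-and-forth conditions in which elements
of `M` may be replaced by elements that agree with them on the formulas in `Γ`. For `Γ = univ` it
covers `k`-bisimilarity; the additional freedom is needed for unravellings that realise each
pattern of truth values of `Γ` by a single representative. -/
structure IsGradedBisim (A M : Str U B) (SU : Set U) (SB : Set B) (Γ : Set (Fml U B))
    (Z : ℕ → A.Dom → M.Dom → Prop) : Prop where
  atp1_eq : ∀ {k a m}, Z k a m → atp1 A SU SB a = atp1 M SU SB m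
  of_succ : ∀ {k a m}, Z (k + 1) a m → Z k a m
  exists_right : ∀ k a, ∃ m, Z k a m
  exists_left : ∀ k m, ∃ a, Z k a m
  forth : ∀ {k a m}, Z (k + 1) a m → ∀ a', a' ≠ a → Guarded2 A SB a a' →
    ∃ m₀ m', m' ≠ m₀ ∧ atp2 A SU SB a a' = atp2 M SU SB m₀ m' ∧ Z k a m₀ ∧ Z k a' m' ∧
      AgreeOn M M Γ (fun _ => m) (fun _ => m₀)
  back : ∀ {k a m}, Z (k + 1) a m → ∃ m₀, Z k a m₀ ∧ AgreeOn M M Γ (fun _ => m) (fun _ => m₀) ∧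
    ∀ m', m' ≠ m₀ → Guarded2 M SB m₀ m' → ∃ a' m₀', a' ≠ a ∧ m₀' ≠ m₀ ∧
      atp2 A SU SB a a' = atp2 M SU SB m₀ m₀' ∧ Z k a' m₀' ∧
      ∀ v, AgreeOn M M Γ (upd (fun _ => m₀) v m') (upd (fun _ => m₀) v m₀')

/-- On the variables in `V`, the map `σ v ↦ τ v` is contained in `Z` and preserves equality and
the binary predicates in `SB`. -/
structure Corresponds (A M : Str U B) (SB : Set B) (Z : A.Dom → M.Dom → Prop) (V : Set Var)
    (σ : Var → A.Dom) (τ : Var → M.Dom) : Prop where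
  rel : ∀ v ∈ V, Z (σ v) (τ v)
  eq_iff : ∀ v ∈ V, ∀ w ∈ V, (σ v = σ w ↔ τ v = τ w)
  b_iff : ∀ v ∈ V, ∀ w ∈ V, ∀ R ∈ SB, (A.b R (σ v) (σ w) ↔ M.b R (τ v) (τ w))

namespace Corresponds

variable {Z : A.Dom → M.Dom → Prop} {V W : Set Var} {σ : Var → A.Dom} {τ : Var → M.Dom}

theorem mono (h : Corresponds A M SB Z W σ τ) (hVW : V ⊆ W) : Corresponds A M SB Z V σ τ where
  rel v hv := h.rel v (hVW hv)
  eq_iff v hv w hw := h.eq_iff v (hVW hv) w (hVW hw)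
  b_iff v hv w hw := h.b_iff v (hVW hv) w (hVW hw)

theorem of_const {a : A.Dom} {m : M.Dom} (hz : Z a m) (hat : atp1 A SU SB a = atp1 M SU SB m)
    (hσ : ∀ u ∈ V, σ u = a) (hτ : ∀ u ∈ V, τ u = m) : Corresponds A M SB Z V σ τ where
  rel v hv := by rwa [hσ v hv, hτ v hv]
  eq_iff v hv w hw := by simp [hσ v hv, hτ v hv, hσ w hw, hτ w hw]
  b_iff v hv w hw R hR := by
    rw [hσ v hv, hτ v hv, hσ w hw, hτ w hw]
    exact (atp1_eq_iff.1 hat).2 R hR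

theorem upd {v w : Var} (hwv : w ≠ v) {a' : A.Dom} {m' : M.Dom} (hz : Z (σ w) (τ w))
    (hz' : Z a' m') (ha : a' ≠ σ w) (hm : m' ≠ τ w)
    (hat : atp2 A SU SB (σ w) a' = atp2 M SU SB (τ w) m') :
    Corresponds A M SB Z V (upd σ v a') (upd τ v m') := by
  obtain ⟨hw, hv, hb⟩ := atp2_eq_iff.1 hat
  constructor
  · intro u _
    rcases Var.eq_or_eq hwv u with rfl | rfl
    · simpa using hz'
    · simpa [upd_of_ne _ hwv] using hz
  · intro u _ u' _
    rcases Var.eq_or_eq hwv u with rfl | rfl <;> rcases Var.eq_or_eq hwv u' with rfl | rfl <;>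
      simp [upd_of_ne _ hwv, ha, hm, ha.symm, hm.symm]
  · intro u _ u' _ R hR
    rcases Var.eq_or_eq hwv u with rfl | rfl <;> rcases Var.eq_or_eq hwv u' with rfl | rfl <;>
      simp only [upd_self, upd_of_ne _ hwv]
    exacts [(atp1_eq_iff.1 hv).2 R hR, (hb R hR).2, (hb R hR).1, (atp1_eq_iff.1 hw).2 R hR]

end Corresponds

variable {Γ : Set (Fml U B)} {k : ℕ}

/-- The formulas all of whose subformulas lie in `Γ`, over the signature `(SU, SB)` and of guarded
quantifier depth at most `k`: those for which `Z k` is shown to preserve truth. -/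
structure InFragment (SU : Set U) (SB : Set B) (Γ : Set (Fml U B)) (k : ℕ) (ψ : Fml U B) :
    Prop where
  subf : ψ.Subf ⊆ Γ
  upreds : ψ.upreds ⊆ SU
  bpreds : ψ.bpreds ⊆ SB
  gdepth_le : ψ.gdepth ≤ k

theorem InFragment.of_mem_subf {φ ψ : Fml U B} (hψ : InFragment SU SB Γ k ψ)
    (h : φ ∈ ψ.Subf) : InFragment SU SB Γ k φ where
  subf := (Fml.subf_subset h).trans hψ.subf
  upreds := (Fml.upreds_subset h).trans hψ.upreds
  bpreds := (Fml.bpreds_subset h).trans hψ.bpreds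
  gdepth_le := (Fml.gdepth_le h).trans hψ.gdepth_le

theorem InFragment.mem {ψ : Fml U B} (hψ : InFragment SU SB Γ k ψ) : ψ ∈ Γ :=
  hψ.subf ψ.self_mem_subf

theorem InFragment.exists_of_gdepth_lt {φ ψ : Fml U B} (hψ : InFragment SU SB Γ k ψ)
    (h : φ ∈ ψ.Subf) (hlt : φ.gdepth < ψ.gdepth) : ∃ j, k = j + 1 ∧ InFragment SU SB Γ j φ := by
  have hφ := hψ.of_mem_subf h
  obtain ⟨j, rfl⟩ : ∃ j, k = j + 1 := Nat.exists_eq_add_one.2 (hlt.trans_le hψ.gdepth_le).pos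
  exact ⟨j, rfl, hφ.subf, hφ.upreds, hφ.bpreds, Nat.le_of_lt_succ (hlt.trans_le hψ.gdepth_le)⟩

namespace IsGradedBisim

variable {Z : ℕ → A.Dom → M.Dom → Prop} {χ : Fml U B} {v w : Var}
  {σ : Var → A.Dom} {τ : Var → M.Dom}

theorem sat_atom_iff (hZ : IsGradedBisim A M SU SB Γ Z) {α : Fml U B} (hα : α.IsAtom)
    (hu : α.upreds ⊆ SU) (hb : α.bpreds ⊆ SB) (h : Corresponds A M SB (Z k) α.free σ τ) :
    Sat A α σ ↔ Sat M α τ := by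
  cases α with
  | uatom P v => exact (atp1_eq_iff.1 (hZ.atp1_eq (h.rel v rfl))).1 P (hu rfl)
  | batom R v w => exact h.b_iff v (Or.inl rfl) w (Or.inr rfl) R (hb rfl)
  | eqv v w => exact h.eq_iff v (Or.inl rfl) w (Or.inr rfl)
  | _ => exact hα.elim

theorem sat_ex_iff_of_free_subset_singleton (hZ : IsGradedBisim A M SU SB Γ Z)
    (hχ : ∀ σ τ, Corresponds A M SB (Z k) χ.free σ τ → (Sat A χ σ ↔ Sat M χ τ))
    (hfree : χ.free ⊆ {v}) : Sat A (.ex v χ) σ ↔ Sat M (.ex v χ) τ := by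
  have corr {a : A.Dom} {m : M.Dom} (h : Z k a m) :
      Corresponds A M SB (Z k) χ.free (upd σ v a) (upd τ v m) :=
    .of_const h (hZ.atp1_eq h) (fun u hu => Set.mem_singleton_iff.1 (hfree hu) ▸ upd_self ..)
      (fun u hu => Set.mem_singleton_iff.1 (hfree hu) ▸ upd_self ..)
  constructor
  · rintro ⟨a, ha⟩
    obtain ⟨m, ham⟩ := hZ.exists_right k a
    exact ⟨m, (hχ _ _ (corr ham)).1 ha⟩
  · rintro ⟨m, hm⟩
    obtain ⟨a, ham⟩ := hZ.exists_left k m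
    exact ⟨a, (hχ _ _ (corr ham)).2 hm⟩

theorem sat_ex_of_sat_ex (hZ : IsGradedBisim A M SU SB Γ Z) (hguard : SemGuarded SB χ)
    (hχ : ∀ σ τ, Corresponds A M SB (Z k) χ.free σ τ → (Sat A χ σ ↔ Sat M χ τ))
    (hex : ∀ τ τ', AgreeOn M M Γ τ τ' → (Sat M (.ex v χ) τ ↔ Sat M (.ex v χ) τ'))
    (hv : v ∈ χ.free) (hw : w ∈ χ.free) (hwv : w ≠ v) (hz : Z (k + 1) (σ w) (τ w))
    (h : Sat A (.ex v χ) σ) : Sat M (.ex v χ) fun _ => τ w := by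
  obtain ⟨a', ha'⟩ := h
  by_cases haw : a' = σ w
  · refine ⟨τ w, (hχ _ _ (.of_const (hZ.of_succ hz) (hZ.atp1_eq hz) ?_ ?_)).1 ha'⟩ <;>
      intro u _ <;> rcases Var.eq_or_eq hwv u with rfl | rfl <;> simp [upd, haw]
  · have hg : Guarded2 A SB (σ w) a' := by
      simpa [upd_of_ne _ hwv] using
        hguard A _ ha' w hw v hv (by simpa [upd_of_ne _ hwv] using haw)
    obtain ⟨m₀, m', hne, hat, hz₀, hz', hagree⟩ := hZ.forth hz a' haw hg
    exact (hex _ _ hagree).2 ⟨m', (hχ _ _ (.upd (σ := σ) hwv hz₀ hz' haw hne hat)).1 ha'⟩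

theorem sat_ex_of_sat_ex_right (hZ : IsGradedBisim A M SU SB Γ Z) (hguard : SemGuarded SB χ)
    (hχ : ∀ σ τ, Corresponds A M SB (Z k) χ.free σ τ → (Sat A χ σ ↔ Sat M χ τ))
    (hinv : ∀ τ τ', AgreeOn M M Γ τ τ' → (Sat M χ τ ↔ Sat M χ τ'))
    (hex : ∀ τ τ', AgreeOn M M Γ τ τ' → (Sat M (.ex v χ) τ ↔ Sat M (.ex v χ) τ'))
    (hv : v ∈ χ.free) (hw : w ∈ χ.free) (hwv : w ≠ v) (hz : Z (k + 1) (σ w) (τ w))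
    (h : Sat M (.ex v χ) fun _ => τ w) : Sat A (.ex v χ) σ := by
  obtain ⟨m₀, hz₀, hagree, hback⟩ := hZ.back hz
  obtain ⟨m', hm'⟩ := (hex _ _ hagree).1 h
  by_cases hmm : m' = m₀
  · refine ⟨σ w, (hχ _ _ (.of_const hz₀ (hZ.atp1_eq hz₀) ?_ ?_)).2 hm'⟩ <;>
      intro u _ <;> rcases Var.eq_or_eq hwv u with rfl | rfl <;> simp [upd, hmm]
  · have hg : Guarded2 M SB m₀ m' := by
      simpa [upd_of_ne _ hwv] using
        hguard M _ hm' w hw v hv (by simpa [upd_of_ne _ hwv] using hmm)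
    obtain ⟨a', m₀', ha', hm₀', hat, hz', hagree'⟩ := hback m' hmm hg
    exact ⟨a', (hχ _ _ (.upd (τ := fun _ => m₀) hwv hz₀ hz' ha' hm₀' hat)).2
      ((hinv _ _ (hagree' v)).1 hm')⟩

theorem sat_ex_iff (hZ : IsGradedBisim A M SU SB Γ Z) (hguard : SemGuarded SB χ)
    (hχ : ∀ σ τ, Corresponds A M SB (Z k) χ.free σ τ → (Sat A χ σ ↔ Sat M χ τ))
    (hinv : ∀ τ τ', AgreeOn M M Γ τ τ' → (Sat M χ τ ↔ Sat M χ τ'))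
    (hex : ∀ τ τ', AgreeOn M M Γ τ τ' → (Sat M (.ex v χ) τ ↔ Sat M (.ex v χ) τ'))
    (hv : v ∈ χ.free) (h : Corresponds A M SB (Z (k + 1)) (χ.free \ {v}) σ τ) :
    Sat A (.ex v χ) σ ↔ Sat M (.ex v χ) τ := by
  by_cases hfree : χ.free ⊆ {v}
  · exact hZ.sat_ex_iff_of_free_subset_singleton hχ hfree
  · obtain ⟨w, hw, hwv⟩ := Set.not_subset.1 hfree
    have hconst : Sat M (.ex v χ) τ ↔ Sat M (.ex v χ) fun _ => τ w := sat_congr fun u hu => by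
      rw [(Var.eq_or_eq hwv u).resolve_left hu.2]
    have hz := h.rel w ⟨hw, hwv⟩
    rw [hconst]
    exact ⟨hZ.sat_ex_of_sat_ex hguard hχ hex hv hw hwv hz,
      hZ.sat_ex_of_sat_ex_right hguard hχ hinv hex hv hw hwv hz⟩

theorem sat_ex_conj_iff (hZ : IsGradedBisim A M SU SB Γ Z) {α φ : Fml U B} (hα : α.IsAtom)
    (hfrag : InFragment SU SB Γ k α) (hfree : φ.free ∪ {v} ⊆ α.free)
    (hφ : ∀ σ τ, Corresponds A M SB (Z k) φ.free σ τ → (Sat A φ σ ↔ Sat M φ τ))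
    (hinv : ∀ τ τ', AgreeOn M M Γ τ τ' → (Sat M φ τ ↔ Sat M φ τ'))
    (hex : ∀ τ τ', AgreeOn M M Γ τ τ' →
      (Sat M (.ex v (.conj α φ)) τ ↔ Sat M (.ex v (.conj α φ)) τ'))
    (h : Corresponds A M SB (Z (k + 1)) ((α.free ∪ φ.free) \ {v}) σ τ) :
    Sat A (.ex v (.conj α φ)) σ ↔ Sat M (.ex v (.conj α φ)) τ := by
  have hguard : SemGuarded SB (.conj α φ) :=
    (semGuarded_of_isAtom hα hfrag.bpreds).conj (Set.subset_union_left.trans hfree)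
  refine hZ.sat_ex_iff hguard (fun σ τ h => and_congr ?_ (hφ σ τ (h.mono Set.subset_union_right)))
    (fun τ τ' h => and_congr (h α hfrag.mem) (hinv τ τ' h)) hex (.inl (hfree (.inr rfl))) h
  exact hZ.sat_atom_iff hα hfrag.upreds hfrag.bpreds (h.mono Set.subset_union_left)

theorem sat_iff (hZ : IsGradedBisim A M SU SB Γ Z) {ψ : Fml U B} (hψ : IsGF2 ψ)
    (hfrag : InFragment SU SB Γ k ψ) (h : Corresponds A M SB (Z k) ψ.free σ τ) :
    Sat A ψ σ ↔ Sat M ψ τ := by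
  have atom {k σ τ} {α : Fml U B} (hα : α.IsAtom) (hfrag : InFragment SU SB Γ k α) :
      Corresponds A M SB (Z k) α.free σ τ → (Sat A α σ ↔ Sat M α τ) :=
    hZ.sat_atom_iff hα hfrag.upreds hfrag.bpreds
  induction hψ generalizing k σ τ with
  | uatom P v | batom P v w | eqv v w => exact atom trivial hfrag h
  | fls => rfl
  | @neg φ _ ih => exact not_congr (ih (hfrag.of_mem_subf (.inr φ.self_mem_subf)) h)
  | @conj φ ψ _ _ ihφ ihψ =>
    exact and_congr
      (ihφ (hfrag.of_mem_subf (.inr (.inl φ.self_mem_subf))) (h.mono Set.subset_union_left))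
      (ihψ (hfrag.of_mem_subf (.inr (.inr ψ.self_mem_subf))) (h.mono Set.subset_union_right))
  | @disj φ ψ _ _ ihφ ihψ =>
    exact or_congr
      (ihφ (hfrag.of_mem_subf (.inr (.inl φ.self_mem_subf))) (h.mono Set.subset_union_left))
      (ihψ (hfrag.of_mem_subf (.inr (.inr ψ.self_mem_subf))) (h.mono Set.subset_union_right))
  | @impl φ ψ _ _ ihφ ihψ =>
    exact imp_congr
      (ihφ (hfrag.of_mem_subf (.inr (.inl φ.self_mem_subf))) (h.mono Set.subset_union_left))
      (ihψ (hfrag.of_mem_subf (.inr (.inr ψ.self_mem_subf))) (h.mono Set.subset_union_right))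
  | @allG v α φ hα _ hfree ih =>
    obtain ⟨k, rfl, hχ⟩ :=
      hfrag.exists_of_gdepth_lt (.inr (α.impl φ).self_mem_subf) (Nat.lt_succ_self _)
    have hα' := hχ.of_mem_subf (.inr (.inl α.self_mem_subf))
    have hφ' := hχ.of_mem_subf (.inr (.inr φ.self_mem_subf))
    rw [sat_all_impl_iff, sat_all_impl_iff]
    refine not_congr (hZ.sat_ex_conj_iff (φ := .neg φ) hα hα' hfree
      (fun σ τ h => not_congr (ih hφ' h)) (fun τ τ' h => not_congr (h φ hφ'.mem))
      (fun τ τ' hagree => ?_) h)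
    exact not_iff_not.1 (by simpa only [sat_all_impl_iff] using hagree _ hfrag.mem)
  | @exG v α φ hα _ hfree ih =>
    obtain ⟨k, rfl, hχ⟩ :=
      hfrag.exists_of_gdepth_lt (.inr (α.conj φ).self_mem_subf) (Nat.lt_succ_self _)
    have hα' := hχ.of_mem_subf (.inr (.inl α.self_mem_subf))
    have hφ' := hχ.of_mem_subf (.inr (.inr φ.self_mem_subf))
    exact hZ.sat_ex_conj_iff hα hα' hfree (fun σ τ h => ih hφ' h) (fun τ τ' h => h φ hφ'.mem)
      (fun τ τ' h => h _ hfrag.mem) h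

theorem satS_iff (hZ : IsGradedBisim A M SU SB Γ Z) {ψ : Fml U B} (hψ : IsGF2 ψ)
    (hs : ψ.IsSentence) (hΓ : ψ.Subf ⊆ Γ) (hu : ψ.upreds ⊆ SU) (hb : ψ.bpreds ⊆ SB) :
    SatS A ψ ↔ SatS M ψ := by
  obtain ⟨a⟩ := A.nonempty
  obtain ⟨m⟩ := M.nonempty
  rw [satS_iff_sat hs fun _ => a, satS_iff_sat hs fun _ => m]
  refine hZ.sat_iff hψ ⟨hΓ, hu, hb, le_rfl⟩ ?_
  rw [hs]
  constructor <;> simp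

end IsGradedBisim

end

section

/-! ### Regular forest models -/

variable {U B : Type} {M : Str U B} {SU : Set U} {SB : Set B} {ι : Type}

/-- Instructions for unravelling `M` into a forest: from an element `q`, a move `i : ι` leads to
`succ q i`, which is then replaced by its representative under `rep`. The unravelling is regular
as soon as `rep` has finite range. -/
structure Unravelling (M : Str U B) (ι : Type) where
  rep : M.Dom → M.Dom
  succ : M.Dom → ι → M.Dom
  IsMove : M.Dom → ι → Prop
  succ_ne : ∀ {q i}, IsMove q i → succ q i ≠ q
  guarded : ∀ {q i}, IsMove q i → Guarded2 M Set.univ q (succ q i)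

namespace Unravelling

variable (T : Unravelling M ι)

/-- The element reached from `q` by a list of moves, the head of the list being the last move. -/
def run (q : M.Dom) : List ι → M.Dom
  | [] => q
  | i :: l => T.rep (T.succ (run q l) i)

/-- All moves in the list are legal when it is run from `q`. -/
def IsPath (q : M.Dom) : List ι → Prop
  | [] => True
  | i :: l => T.IsMove (T.run q l) i ∧ IsPath q l

/-- The element of `M` that the node `n` of the unravelling is a copy of. -/
def state (n : M.Dom × List ι) : M.Dom :=
  T.run (T.rep n.1) n.2

/-- The unravelling of `M`: a node is a starting point with a list of moves, and a predicate
relates a node and its successors as it relates the corresponding elements of `M` before they are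
replaced by their representatives. -/
def str : Str U B where
  Dom := M.Dom × List ι
  nonempty := ⟨Classical.choice M.nonempty, []⟩
  u P n := M.u P (T.state n)
  b R c d :=
    (c = d ∧ M.b R (T.state c) (T.state c)) ∨
    (∃ i, d = (c.1, i :: c.2) ∧ T.IsMove (T.state c) i ∧
      M.b R (T.state c) (T.succ (T.state c) i)) ∨
    ∃ i, c = (d.1, i :: d.2) ∧ T.IsMove (T.state d) i ∧
      M.b R (T.succ (T.state d) i) (T.state d)

/-- `c` arises from `p` by one legal move. -/
def IsParent (p c : M.Dom × List ι) : Prop :=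
  ∃ i, c = (p.1, i :: p.2) ∧ T.IsMove (T.state p) i

variable {T}

theorem run_append (q : M.Dom) (l l' : List ι) :
    T.run q (l' ++ l) = T.run (T.run q l) l' := by
  induction l' with
  | nil => rfl
  | cons i l' ih => simp only [List.cons_append, run, ih]

theorem state_append {n : M.Dom × List ι} {q : M.Dom} (hn : T.state n = q) (l : List ι) :
    T.state (n.1, l ++ n.2) = T.run q l :=
  hn ▸ run_append ..

theorem ne_child {n : M.Dom × List ι} {i : ι} : n ≠ (n.1, i :: n.2) := fun h =>
  List.cons_ne_self i n.2 (congrArg Prod.snd h).symm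

theorem ne_grandchild {n : M.Dom × List ι} {i j : ι} : n ≠ (n.1, i :: j :: n.2) := fun h => by
  have hlen := congrArg (List.length ∘ Prod.snd) h
  simp only [Function.comp_apply, List.length_cons] at hlen
  omega

theorem IsParent.exists_b {p c : M.Dom × List ι} (h : T.IsParent p c) :
    p ≠ c ∧ ∃ R, T.str.b R p c ∨ T.str.b R c p := by
  obtain ⟨i, rfl, hi⟩ := h
  obtain ⟨R, -, hR⟩ := T.guarded hi
  exact ⟨ne_child, R, hR.imp (fun h => .inr (.inl ⟨i, rfl, hi, h⟩))
    fun h => .inr (.inr ⟨i, rfl, hi, h⟩)⟩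

theorem isParent_or_isParent {n n' : M.Dom × List ι} {R : B} (hne : n ≠ n')
    (h : T.str.b R n n') : T.IsParent n n' ∨ T.IsParent n' n := by
  rcases h with ⟨rfl, -⟩ | ⟨i, hi, hm, -⟩ | ⟨i, hi, hm, -⟩
  exacts [(hne rfl).elim, .inl ⟨i, hi, hm⟩, .inr ⟨i, hi, hm⟩]

variable (T) in
/-- The unravelling of `M`, directed away from the nodes without moves. -/
def forest : Forest U B where
  toStr := T.str
  parent := T.IsParent
  parent_unique := by
    rintro c ⟨p, l⟩ ⟨p', l'⟩ ⟨i, rfl, -⟩ ⟨j, h, -⟩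
    simp only [Prod.mk.injEq, List.cons.injEq] at h
    exact Prod.ext h.1 h.2.2
  parent_wf := by
    refine Subrelation.wf ?_ (InvImage.wf (List.length ∘ Prod.snd) wellFounded_lt)
    rintro p c ⟨i, rfl, -⟩
    exact Nat.lt_succ_self _
  adj_iff a a' := by
    constructor
    · rintro ⟨hne, R, h | h⟩
      exacts [isParent_or_isParent hne h, (isParent_or_isParent hne.symm h).symm]
    · rintro (h | h)
      · exact h.exists_b
      · exact ⟨h.exists_b.1.symm, h.exists_b.2.imp fun _ => Or.symm⟩

theorem finiteOutdeg [Finite ι] : FiniteOutdeg T.forest.toStr := by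
  rintro ⟨q, l⟩
  refine ((Set.finite_range fun i => (q, i :: l)).union
    (Set.finite_singleton (q, l.tail))).subset ?_
  rintro n ⟨hne, hb⟩
  rcases (T.forest.adj_iff (q, l) n).1 ⟨hne.symm, hb⟩ with ⟨i, rfl, -⟩ | ⟨i, h, -⟩
  · exact .inl ⟨i, rfl⟩
  · obtain ⟨rfl, rfl⟩ := Prod.mk.inj h
    exact .inr rfl

theorem mem_desc_iff {n c : M.Dom × List ι} :
    c ∈ T.forest.desc n ↔ ∃ l, c = (n.1, l ++ n.2) ∧ T.IsPath (T.state n) l := by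
  constructor
  · intro h
    induction h with
    | refl => exact ⟨[], rfl, trivial⟩
    | tail _ h ih =>
      obtain ⟨l, rfl, hl⟩ := ih
      obtain ⟨i, rfl, hi⟩ := h
      exact ⟨i :: l, rfl, state_append rfl l ▸ hi, hl⟩
  · rintro ⟨l, rfl, hl⟩
    induction l with
    | nil => exact .refl
    | cons i l ih => exact .tail (ih hl.2) ⟨i, rfl, (state_append rfl l).symm ▸ hl.1⟩

theorem isParent_append_iff {n : M.Dom × List ι} {q : M.Dom} (hn : T.state n = q)
    {c d : List ι} : T.IsParent (n.1, c ++ n.2) (n.1, d ++ n.2) ↔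
      ∃ i, d = i :: c ∧ T.IsMove (T.run q c) i := by
  simp only [IsParent, state_append hn, ← List.cons_append, Prod.mk.injEq, true_and,
    List.append_left_inj]

theorem b_append_iff {n : M.Dom × List ι} {q : M.Dom} (hn : T.state n = q) {c d : List ι} {R : B} :
    T.str.b R (n.1, c ++ n.2) (n.1, d ++ n.2) ↔
      (c = d ∧ M.b R (T.run q c) (T.run q c)) ∨
      (∃ i, d = i :: c ∧ T.IsMove (T.run q c) i ∧ M.b R (T.run q c) (T.succ (T.run q c) i)) ∨
      ∃ i, c = i :: d ∧ T.IsMove (T.run q d) i ∧ M.b R (T.succ (T.run q d) i) (T.run q d) := by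
  simp only [str, state_append hn, ← List.cons_append, Prod.mk.injEq, true_and,
    List.append_left_inj]

/-- The descendants of a node of state `q` are the paths from `q`. -/
noncomputable def pathEquivDesc {n : M.Dom × List ι} {q : M.Dom} (hn : T.state n = q) :
    {l // T.IsPath q l} ≃ T.forest.desc n :=
  Equiv.ofBijective (fun l => ⟨(n.1, l.1 ++ n.2), mem_desc_iff.2 ⟨l.1, rfl, hn ▸ l.2⟩⟩) <| by
    constructor
    · intro l l' h
      exact Subtype.ext (List.append_cancel_right (congrArg (Prod.snd ∘ Subtype.val) h))
    · rintro ⟨c, hc⟩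
      obtain ⟨l, rfl, hl⟩ := mem_desc_iff.1 hc
      exact ⟨⟨l, hn ▸ hl⟩, rfl⟩

theorem subtreeIso_of_state_eq {n m : M.Dom × List ι} (h : T.state n = T.state m) :
    T.forest.SubtreeIso n m := by
  let e := pathEquivDesc h
  let f := e.symm.trans (pathEquivDesc rfl)
  have hf (l) : (f (e l)).val = (m.1, l.1 ++ m.2) :=
    congrArg (fun l => (pathEquivDesc rfl l).val) (e.symm_apply_apply l)
  refine ⟨f, hf ⟨[], trivial⟩, e.surjective.forall₂.2 fun c d => ?_,
    fun P => e.surjective.forall.2 fun c => ?_, fun R => e.surjective.forall₂.2 fun c d => ?_⟩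
  · rw [hf, hf]
    exact (isParent_append_iff h).trans (isParent_append_iff rfl).symm
  · rw [hf]
    exact iff_of_eq (congrArg (M.u P) ((state_append h c).trans (state_append (n := m) rfl c).symm))
  · rw [hf, hf]
    exact (b_append_iff h).trans (b_append_iff rfl).symm

theorem state_mem_range (n : M.Dom × List ι) : T.state n ∈ Set.range T.rep := by
  obtain ⟨q, _ | ⟨i, l⟩⟩ := n
  exacts [⟨q, rfl⟩, ⟨_, rfl⟩]

theorem regular (hfin : (Set.range T.rep).Finite) : T.forest.Regular := by
  have : Finite (Set.range T.state) :=
    (hfin.subset (Set.range_subset_iff.2 state_mem_range)).to_subtype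
  exact ⟨Set.range (Set.rangeSplitting T.state), Set.finite_range _, fun n =>
    ⟨_, ⟨⟨T.state n, n, rfl⟩, rfl⟩, subtreeIso_of_state_eq (Set.apply_rangeSplitting _ _)⟩⟩

theorem atp1_str {n : M.Dom × List ι} : atp1 T.str SU SB n = atp1 M SU SB (T.state n) :=
  atp1_eq_iff.2 ⟨fun _ _ => .rfl, fun _ _ => by simp [str, ne_child]⟩

theorem atp2_child_eq {n : M.Dom × List ι} {i : ι} (hi : T.IsMove (T.state n) i)
    (hrep : atp1 M SU SB (T.rep (T.succ (T.state n) i)) = atp1 M SU SB (T.succ (T.state n) i)) :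
    atp2 T.str SU SB n (n.1, i :: n.2) = atp2 M SU SB (T.state n) (T.succ (T.state n) i) := by
  refine atp2_eq_iff.2 ⟨atp1_str, atp1_str.trans hrep, fun R _ => ?_⟩
  simp [str, ne_child, ne_child.symm, ne_grandchild, hi]

variable (T) in
/-- Passing to representatives, and restricting to the chosen successors, loses no information
that can be expressed by formulas in `Γ`. -/
structure IsFaithful (SB : Set B) (Γ : Set (Fml U B)) : Prop where
  agreeOn_rep : ∀ m, AgreeOn M M Γ (fun _ => T.rep m) (fun _ => m)
  exists_isMove : ∀ {q m}, m ≠ q → Guarded2 M SB q m → ∃ i, T.IsMove q i ∧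
    ∀ v, AgreeOn M M Γ (upd (fun _ => q) v m) (upd (fun _ => q) v (T.succ q i))

theorem IsFaithful.isGradedBisim {Γ : Set (Fml U B)} (hT : T.IsFaithful SB Γ)
    (hΓ : ∀ {m m'}, AgreeOn M M Γ (fun _ => m) (fun _ => m') → atp1 M SU SB m = atp1 M SU SB m') :
    IsGradedBisim T.str M SU SB Γ fun _ n m => AgreeOn M M Γ (fun _ => T.state n) fun _ => m where
  atp1_eq h := atp1_str.trans (hΓ h)
  of_succ h := h
  exists_right _ n := ⟨T.state n, .refl _⟩
  exists_left _ m := ⟨(m, []), hT.agreeOn_rep m⟩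
  forth := by
    rintro _ n m h n' hne ⟨R, -, hR⟩
    rcases (T.forest.adj_iff n n').1 ⟨hne.symm, R, hR⟩ with ⟨i, rfl, hi⟩ | ⟨i, rfl, hi⟩
    · exact ⟨_, _, T.succ_ne hi, atp2_child_eq hi (hΓ (hT.agreeOn_rep _)), .refl _,
        hT.agreeOn_rep _, h.symm⟩
    · exact ⟨_, _, (T.succ_ne hi).symm,
        atp2_swap_eq_of_atp2_eq (atp2_child_eq hi (hΓ (hT.agreeOn_rep _))), hT.agreeOn_rep _,
        .refl _, h.symm.trans (hT.agreeOn_rep _)⟩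
  back := by
    intro _ n m h
    refine ⟨T.state n, .refl _, h.symm, fun m' hne hg => ?_⟩
    obtain ⟨i, hi, hagree⟩ := hT.exists_isMove hne hg
    exact ⟨_, _, ne_child.symm, T.succ_ne hi, atp2_child_eq hi (hΓ (hT.agreeOn_rep _)),
      hT.agreeOn_rep _, hagree⟩

theorem exists_isFaithful (M : Str U B) (SB : Set B) {Γ : Set (Fml U B)} (hΓ : Γ.Finite) :
    ∃ (ι : Type) (_ : Finite ι) (T : Unravelling M ι),
      T.IsFaithful SB Γ ∧ (Set.range T.rep).Finite := by
  have : Finite Γ := hΓ.to_subtype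
  let type₁ (m : M.Dom) : Set Γ := {ψ | Sat M ψ fun _ => m}
  let type₂ (q m : M.Dom) (v : Var) : Set Γ := {ψ | Sat M ψ (upd (fun _ => q) v m)}
  let succ (q : M.Dom) (i : Var → Set Γ) : M.Dom :=
    Classical.epsilon fun m => m ≠ q ∧ Guarded2 M SB q m ∧ type₂ q m = i
  refine ⟨Var → Set Γ, inferInstance,
    { rep := fun m => Function.invFun type₁ (type₁ m)
      succ := succ
      IsMove := fun q i => succ q i ≠ q ∧ Guarded2 M SB q (succ q i)
      succ_ne := And.left
      guarded := fun h => h.2.imp fun _ hR => ⟨trivial, hR.2⟩ }, ⟨fun m ψ hψ => ?_, ?_⟩,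
    (Set.finite_range (Function.invFun type₁)).subset
      (Set.range_subset_iff.2 fun m => ⟨type₁ m, rfl⟩)⟩
  · exact Set.ext_iff.1 (Function.invFun_eq (f := type₁) ⟨m, rfl⟩) ⟨ψ, hψ⟩
  · intro q m hne hg
    obtain ⟨hne', hg', htype⟩ := Classical.epsilon_spec
      (p := fun m' => m' ≠ q ∧ Guarded2 M SB q m' ∧ type₂ q m' = type₂ q m) ⟨m, hne, hg, rfl⟩
    exact ⟨type₂ q m, ⟨hne', hg'⟩, fun v ψ hψ =>
      (Set.ext_iff.1 (congrFun htype v) ⟨ψ, hψ⟩).symm⟩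

end Unravelling

theorem Fml.exists_uatom_mem_subf {φ : Fml U B} {P : U} (h : P ∈ φ.upreds) :
    ∃ v, uatom P v ∈ φ.Subf := by
  induction φ <;> simp only [upreds, Subf] at h ⊢ <;> grind

theorem Fml.exists_batom_mem_subf {φ : Fml U B} {R : B} (h : R ∈ φ.bpreds) :
    ∃ v w, batom R v w ∈ φ.Subf := by
  induction φ <;> simp only [bpreds, Subf] at h ⊢ <;> grind

theorem Fml.finite_subf (φ : Fml U B) : φ.Subf.Finite := by
  induction φ <;> simp [Subf, *]

theorem exists_regular_forest_model {φ : Fml U B} (hφ : IsGF2 φ) (hs : φ.IsSentence)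
    (hM : SatS M φ) : ∃ F : Forest U B, SatS F.toStr φ ∧ F.Regular ∧ FiniteOutdeg F.toStr := by
  obtain ⟨ι, _, T, hT, hfin⟩ := Unravelling.exists_isFaithful M φ.bpreds φ.finite_subf
  have hZ := hT.isGradedBisim (SU := φ.upreds) fun h =>
    h.atp1_eq (fun _ => Fml.exists_uatom_mem_subf) fun _ => Fml.exists_batom_mem_subf
  exact ⟨T.forest, (hZ.satS_iff hφ hs le_rfl le_rfl le_rfl).2 hM, T.regular hfin, T.finiteOutdeg⟩

end

section

/-! ### Finite approximations of bisimilarity -/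

/-- There is an `r`-path of length `n` from `a` to `c`. -/
def Steps {D : Type} (r : D → D → Prop) : ℕ → D → D → Prop
  | 0, a, c => a = c
  | n + 1, a, c => ∃ d, Steps r n a d ∧ r d c

namespace Steps

variable {D : Type} {r : D → D → Prop} {m n : ℕ} {a b c : D}

theorem single (h : r a b) : Steps r 1 a b := ⟨a, rfl, h⟩

theorem trans (h : Steps r n a b) (h' : Steps r m b c) : Steps r (n + m) a c := by
  induction m generalizing c with
  | zero => exact h' ▸ h
  | succ m ih =>
    obtain ⟨d, hbd, hdc⟩ := h'
    exact ⟨d, ih hbd, hdc⟩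

theorem exists_of_transGen (h : Relation.TransGen r a c) : ∃ n, 0 < n ∧ Steps r n a c := by
  induction h with
  | single h => exact ⟨1, one_pos, .single h⟩
  | tail _ h ih =>
    obtain ⟨n, -, hn⟩ := ih
    exact ⟨n + 1, n.succ_pos, _, hn, h⟩

theorem transGen (h : Steps r (n + 1) a c) : Relation.TransGen r a c := by
  induction n generalizing c with
  | zero =>
    obtain ⟨_, rfl, h⟩ := h
    exact .single h
  | succ n ih =>
    obtain ⟨d, had, hdc⟩ := h
    exact .tail (ih had) hdc

theorem exists_head (h : Steps r (n + 1) a c) : ∃ d, r a d ∧ Steps r n d c := by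
  induction n generalizing c with
  | zero =>
    obtain ⟨_, rfl, h⟩ := h
    exact ⟨c, h, rfl⟩
  | succ n ih =>
    obtain ⟨e, hae, hec⟩ := h
    obtain ⟨d, had, hde⟩ := ih hae
    exact ⟨d, had, e, hde, hec⟩

theorem finite_setOf (hr : ∀ d, {x | r d x}.Finite) (n : ℕ) (a : D) :
    {x | Steps r n a x}.Finite := by
  induction n with
  | zero => exact (Set.finite_singleton a).subset fun x (hx : a = x) => hx.symm
  | succ n ih =>
    refine (ih.biUnion fun d _ => hr d).subset ?_
    rintro x ⟨d, had, hdx⟩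
    exact Set.mem_biUnion had hdx

end Steps

variable {U B : Type} {A M : Str U B} {SU : Set U} {SB : Set B} {a : A.Dom} {b : M.Dom} {k l : ℕ}

/-- The `k`-round approximation of delimited bisimilarity: the back-and-forth conditions are not
required at pairs whose first component lies in `D`. -/
def KDelimBisim (A M : Str U B) (SU : Set U) (SB : Set B) (D : Set A.Dom) :
    ℕ → A.Dom → M.Dom → Prop
  | 0, a, b => atp1 A SU SB a = atp1 M SU SB b
  | k + 1, a, b => atp1 A SU SB a = atp1 M SU SB b ∧ (a ∉ D →
      (∀ a', a' ≠ a → Guarded2 A SB a a' → ∃ b', b' ≠ b ∧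
        atp2 A SU SB a a' = atp2 M SU SB b b' ∧ KDelimBisim A M SU SB D k a' b') ∧
      (∀ b', b' ≠ b → Guarded2 M SB b b' → ∃ a', a' ≠ a ∧
        atp2 A SU SB a a' = atp2 M SU SB b b' ∧ KDelimBisim A M SU SB D k a' b'))

namespace KDelimBisim

variable {D : Set A.Dom}

theorem atp1_eq (h : KDelimBisim A M SU SB D k a b) : atp1 A SU SB a = atp1 M SU SB b := by
  cases k with
  | zero => exact h
  | succ k => exact h.1

theorem of_succ (h : KDelimBisim A M SU SB D (k + 1) a b) : KDelimBisim A M SU SB D k a b := by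
  induction k generalizing a b with
  | zero => exact h.1
  | succ k ih =>
    refine ⟨h.1, fun ha => ⟨fun a' hne hg => ?_, fun b' hne hg => ?_⟩⟩
    · obtain ⟨b', hb', hat, hk⟩ := (h.2 ha).1 a' hne hg
      exact ⟨b', hb', hat, ih hk⟩
    · obtain ⟨a', ha', hat, hk⟩ := (h.2 ha).2 b' hne hg
      exact ⟨a', ha', hat, ih hk⟩

theorem mono (h : KDelimBisim A M SU SB D l a b) (hkl : k ≤ l) : KDelimBisim A M SU SB D k a b :=
  antitone_nat_of_succ_le (f := fun k => KDelimBisim A M SU SB D k a b) (fun _ => of_succ) hkl h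

end KDelimBisim

theorem kDelimBisim_empty_iff : KDelimBisim A M SU SB ∅ k a b ↔ KBisim A M SU SB k a b := by
  induction k generalizing a b with
  | zero => rfl
  | succ k ih => simp only [KDelimBisim, KBisim, ih, Set.mem_empty_iff_false, not_false_eq_true,
      forall_const]

theorem KBisim.mono (h : KBisim A M SU SB l a b) (hkl : k ≤ l) : KBisim A M SU SB k a b :=
  kDelimBisim_empty_iff.1 ((kDelimBisim_empty_iff.2 h).mono hkl)

theorem KBisim.atp1_eq (h : KBisim A M SU SB k a b) : atp1 A SU SB a = atp1 M SU SB b :=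
  (kDelimBisim_empty_iff.2 h).atp1_eq

theorem kBisim_of_back_and_forth {Z : ℕ → A.Dom → M.Dom → Prop}
    (atom : ∀ {k a b}, Z k a b → atp1 A SU SB a = atp1 M SU SB b)
    (forth : ∀ {k a b}, Z (k + 1) a b → ∀ a', a' ≠ a → Guarded2 A SB a a' →
      ∃ b', b' ≠ b ∧ atp2 A SU SB a a' = atp2 M SU SB b b' ∧ Z k a' b')
    (back : ∀ {k a b}, Z (k + 1) a b → ∀ b', b' ≠ b → Guarded2 M SB b b' →
      ∃ a', a' ≠ a ∧ atp2 A SU SB a a' = atp2 M SU SB b b' ∧ Z k a' b')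
    (h : Z k a b) : KBisim A M SU SB k a b := by
  induction k generalizing a b with
  | zero => exact atom h
  | succ k ih =>
    refine ⟨atom h, fun a' hne hg => ?_, fun b' hne hg => ?_⟩
    · obtain ⟨b', hb', hat, hk⟩ := forth h a' hne hg
      exact ⟨b', hb', hat, ih hk⟩
    · obtain ⟨a', ha', hat, hk⟩ := back h b' hne hg
      exact ⟨a', ha', hat, ih hk⟩

theorem Bisim.kBisim (h : Bisim A M SU SB a b) (k : ℕ) : KBisim A M SU SB k a b := by
  obtain ⟨Z, hZ, hab⟩ := h
  exact kBisim_of_back_and_forth (Z := fun _ => Z) hZ.atom_eq hZ.forth hZ.back hab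

/-- `A` and `M` satisfy the global back-and-forth conditions of `k`-bisimilarity. -/
structure GlobalKBisim (A M : Str U B) (SU : Set U) (SB : Set B) (k : ℕ) : Prop where
  exists_right : ∀ a, ∃ b, KBisim A M SU SB k a b
  exists_left : ∀ b, ∃ a, KBisim A M SU SB k a b

theorem isGradedBisim_kBisim (h : ∀ k, GlobalKBisim A M SU SB k) :
    IsGradedBisim A M SU SB Set.univ (KBisim A M SU SB) where
  atp1_eq := KBisim.atp1_eq
  of_succ h := h.mono (Nat.le_succ _)
  exists_right k := (h k).exists_right
  exists_left k := (h k).exists_left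
  forth {k a m} h a' hne hg := by
    obtain ⟨m', hm', hat, hk⟩ := h.2.1 a' hne hg
    exact ⟨m, m', hm', hat, h.mono k.le_succ, hk, .refl _⟩
  back {k a m} h := by
    refine ⟨m, h.mono k.le_succ, .refl _, fun m' hne hg => ?_⟩
    obtain ⟨a', ha', hat, hk⟩ := h.2.2 m' hne hg
    exact ⟨a', m', ha', hne, hat, hk, fun _ => .refl _⟩

end

section

/-! ### From delimited bisimulations to entailment -/

variable {U B : Type} {F : Forest U B} {M : Str U B} {SU : Set U} {SB : Set B}

namespace Forest

theorem not_steps_succ_self {n : ℕ} (a : F.Dom) : ¬ Steps F.parent (n + 1) a a := fun h =>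
  F.parent_wf.transGen.irrefl.irrefl a h.transGen

theorem parent_or_parent_of_guarded2 {a a' : F.Dom} (hne : a' ≠ a)
    (hg : Guarded2 F.toStr SB a a') : F.parent a a' ∨ F.parent a' a :=
  (F.adj_iff a a').1 ⟨hne.symm, hg.imp fun _ => And.right⟩

theorem exists_steps_of_guarded2 {r a a' : F.Dom} {n : ℕ} (h : Steps F.parent (n + 1) r a)
    (hne : a' ≠ a) (hg : Guarded2 F.toStr SB a a') : ∃ m ≥ n, Steps F.parent m r a' := by
  rcases F.parent_or_parent_of_guarded2 hne hg with hc | hp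
  · exact ⟨n + 2, by lia, a, h, hc⟩
  · obtain ⟨p, hrp, hpa⟩ := h
    exact ⟨n, le_rfl, F.parent_unique hpa hp ▸ hrp⟩

end Forest

/-- From an element more than `k` levels below `abot`, `k` rounds never reach the exempted
element `abot`. -/
theorem IsPtDelimBisim.kBisim {abot : F.Dom} {Z : F.Dom → M.Dom → Prop}
    (hZ : IsPtDelimBisim F.toStr M SU SB abot Z) {k m : ℕ} {a : F.Dom} {b : M.Dom} (hab : Z a b)
    (hkm : k < m) (hm : Steps F.parent m abot a) : KBisim F.toStr M SU SB k a b := by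
  have ne_bot {k m a} (hkm : k + 1 < m) (hm : Steps F.parent m abot a) :
      a ≠ abot ∧ ∀ a', a' ≠ a → Guarded2 F.toStr SB a a' →
        ∃ m', k < m' ∧ Steps F.parent m' abot a' := by
    obtain ⟨n, rfl⟩ := Nat.exists_eq_add_one.2 (Nat.zero_lt_of_lt hkm)
    refine ⟨fun h => F.not_steps_succ_self abot (h ▸ hm), fun a' hne hg => ?_⟩
    obtain ⟨m', hm', hs⟩ := F.exists_steps_of_guarded2 hm hne hg
    exact ⟨m', by lia, hs⟩
  refine kBisim_of_back_and_forth
    (Z := fun k a b => Z a b ∧ ∃ m, k < m ∧ Steps F.parent m abot a)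
    (fun h => hZ.atom_eq h.1) ?_ ?_ ⟨hab, m, hkm, hm⟩
  · rintro k a b ⟨hab, m, hkm, hm⟩ a' hne hg
    obtain ⟨hbot, hdeep⟩ := ne_bot hkm hm
    obtain ⟨b', hb', hat, hz⟩ := hZ.forth hab hbot a' hne hg
    exact ⟨b', hb', hat, hz, hdeep a' hne hg⟩
  · rintro k a b ⟨hab, m, hkm, hm⟩ b' hne hg
    obtain ⟨hbot, hdeep⟩ := ne_bot hkm hm
    obtain ⟨a', ha', hat, hz⟩ := hZ.back hab hbot b' hne hg
    exact ⟨a', ha', hat, hz, hdeep a' ha' ((guarded2_iff_of_atp2_eq hat).2 hg)⟩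

/-- Condition (2)(b) of the characterization for the element `b`. -/
def HasDelimChain (F : Forest U B) (M : Str U B) (SU : Set U) (SB : Set B) (b : M.Dom) : Prop :=
  ∃ (abot : F.Dom) (as as' : ℕ → F.Dom), F.prec SB abot (as 0) ∧
    (∀ i, F.prec SB (as i) (as (i + 1))) ∧ (∀ i, F.prec SB (as i) (as' i)) ∧
    ∀ i, PtDelimBisim F.toStr M SU SB abot (as' i) b

theorem HasDelimChain.exists_kBisim {b : M.Dom} (h : HasDelimChain F M SU SB b) (k : ℕ) :
    ∃ a, KBisim F.toStr M SU SB k a b := by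
  obtain ⟨abot, as, as', hbot, has, has', hZ⟩ := h
  have deep (i : ℕ) : ∃ m, i < m ∧ Steps F.parent m abot (as i) := by
    induction i with
    | zero => exact Steps.exists_of_transGen hbot.2
    | succ i ih =>
      obtain ⟨m, hm, hs⟩ := ih
      obtain ⟨n, hn, hs'⟩ := Steps.exists_of_transGen (has i).2
      exact ⟨m + n, by lia, hs.trans hs'⟩
  obtain ⟨m, hm, hs⟩ := deep k
  obtain ⟨n, hn, hs'⟩ := Steps.exists_of_transGen (has' k).2
  obtain ⟨Z, hZ, hz⟩ := hZ k
  exact ⟨as' k, hZ.kBisim hz (by lia) (hs.trans hs')⟩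

/-- Conditions (1) and (2) of the characterization for the forest structure `F` and the
structure `M`. -/
structure IsDelimMatch (F : Forest U B) (M : Str U B) (SU : Set U) (SB : Set B) : Prop where
  exists_bisim : ∀ a, ∃ b, Bisim F.toStr M SU SB a b
  exists_bisim_or_hasDelimChain :
    ∀ b, (∃ a, Bisim F.toStr M SU SB a b) ∨ HasDelimChain F M SU SB b

theorem isDelimMatch_iff :
    IsDelimMatch F M SU SB ↔ (∀ a, ∃ b, Bisim F.toStr M SU SB a b) ∧
      ∀ b, (∃ a, Bisim F.toStr M SU SB a b) ∨ HasDelimChain F M SU SB b :=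
  ⟨fun h => ⟨h.1, h.2⟩, fun h => ⟨h.1, h.2⟩⟩

theorem IsDelimMatch.globalKBisim (h : IsDelimMatch F M SU SB) (k : ℕ) :
    GlobalKBisim F.toStr M SU SB k where
  exists_right a := (h.exists_bisim a).imp fun _ hab => hab.kBisim k
  exists_left b := (h.exists_bisim_or_hasDelimChain b).elim
    (fun hb => hb.imp fun _ hab => hab.kBisim k) (fun hb => hb.exists_kBisim k)

theorem gf2Entails_of_forall_exists_isDelimMatch {φ₁ φ₂ : Fml U B} (h₁ : IsGF2 φ₁)
    (hs₁ : φ₁.IsSentence)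
    (h : ∀ F : Forest U B, SatS F.toStr φ₁ → F.Regular → FiniteOutdeg F.toStr →
      ∃ M : Str U B, SatS M φ₂ ∧ IsDelimMatch F M SU SB) :
    GF2Entails SU SB φ₁ φ₂ := by
  intro ψ ⟨hψ, hs, hu, hb⟩ h₂ A hA
  by_contra hn
  have hsent : (φ₁.conj ψ.neg).IsSentence := Set.union_empty_iff.2 ⟨hs₁, hs⟩
  have hA' : SatS A (φ₁.conj ψ.neg) := fun σ => ⟨hA σ, (satS_neg_iff hs).2 hn σ⟩
  obtain ⟨F, hF, hreg, hfin⟩ := exists_regular_forest_model (.conj h₁ (.neg hψ)) hsent hA'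
  obtain ⟨M, hM, hmatch⟩ := h F (fun σ => (hF σ).1) hreg hfin
  have hFψ : SatS F.toStr ψ ↔ SatS M ψ := (isGradedBisim_kBisim hmatch.globalKBisim).satS_iff
    hψ hs (Set.subset_univ _) hu hb
  exact (satS_neg_iff hs).1 (fun σ => (hF σ).2) (hFψ.2 (h₂ M hM))

end

section

/-! ### Subtrees of forest structures -/

variable {U B : Type} {F : Forest U B} {SU : Set U} {SB : Set B}

namespace Forest

/-- `p` is the parent of `c` in the same Σ-tree. -/
def SigParent (F : Forest U B) (SB : Set B) (p c : F.Dom) : Prop :=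
  F.parent p c ∧ SigAdj F.toStr SB p c

theorem finite_setOf_sigParent (hF : FiniteOutdeg F.toStr) (p : F.Dom) :
    {c | F.SigParent SB p c}.Finite :=
  (hF p).subset fun _ hc => ⟨hc.2.1.symm, hc.2.2.imp fun _ => And.right⟩

theorem prec_of_steps_sigParent {a c : F.Dom} {n : ℕ} (h : Steps (F.SigParent SB) (n + 1) a c) :
    F.prec SB a c :=
  ⟨Relation.ReflTransGen.mono (fun _ _ => And.right) _ _ h.transGen.to_reflTransGen,
    Relation.TransGen.mono (fun _ _ => And.left) _ _ h.transGen⟩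

theorem mem_desc_or_sigParent {s x x' : F.Dom} (hx : x ∈ F.desc s) (hne : x' ≠ x)
    (hg : Guarded2 F.toStr SB x x') : x' ∈ F.desc s ∨ x = s ∧ F.SigParent SB x' s := by
  rcases F.parent_or_parent_of_guarded2 hne hg with hc | hp
  · exact .inl (Relation.ReflTransGen.tail hx hc)
  · rcases Relation.ReflTransGen.cases_tail hx with rfl | ⟨p, hsp, hpx⟩
    · exact .inr ⟨rfl, hp, hne, hg.symm⟩
    · exact .inl (F.parent_unique hp hpx ▸ hsp)

/-- The bijection `f` is an isomorphism between the subtrees rooted at `s` and at `c`, as in the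
definition of `SubtreeIso`. -/
structure IsSubtreeIso {s c : F.Dom} (f : F.desc s ≃ F.desc c) : Prop where
  root : (f ⟨s, .refl⟩).val = c
  parent_iff : ∀ x y : F.desc s, F.parent x.val y.val ↔ F.parent (f x).val (f y).val
  u_iff : ∀ (P : U) (x : F.desc s), F.u P x.val ↔ F.u P (f x).val
  b_iff : ∀ (R : B) (x y : F.desc s), F.b R x.val y.val ↔ F.b R (f x).val (f y).val

theorem subtreeIso_iff {s c : F.Dom} :
    F.SubtreeIso s c ↔ ∃ f : F.desc s ≃ F.desc c, IsSubtreeIso f :=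
  exists_congr fun _ => ⟨fun ⟨h₁, h₂, h₃, h₄⟩ => ⟨h₁, h₂, h₃, h₄⟩,
    fun ⟨h₁, h₂, h₃, h₄⟩ => ⟨h₁, h₂, h₃, h₄⟩⟩

namespace IsSubtreeIso

variable {s c d : F.Dom} {f : F.desc s ≃ F.desc c}

theorem apply_root (hf : IsSubtreeIso f) : f ⟨s, .refl⟩ = ⟨c, .refl⟩ := Subtype.ext hf.root

theorem symm (hf : IsSubtreeIso f) : IsSubtreeIso f.symm where
  root := by rw [← hf.apply_root, f.symm_apply_apply]
  parent_iff x y := by simp [hf.parent_iff]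
  u_iff P x := by simp [hf.u_iff]
  b_iff R x y := by simp [hf.b_iff]

theorem trans {g : F.desc c ≃ F.desc d} (hf : IsSubtreeIso f) (hg : IsSubtreeIso g) :
    IsSubtreeIso (f.trans g) where
  root := by rw [Equiv.trans_apply, hf.apply_root, hg.root]
  parent_iff x y := (hf.parent_iff x y).trans (hg.parent_iff _ _)
  u_iff P x := (hf.u_iff P x).trans (hg.u_iff P _)
  b_iff R x y := (hf.b_iff R x y).trans (hg.b_iff R _ _)

theorem eq_root_iff (hf : IsSubtreeIso f) (x : F.desc s) : (f x).val = c ↔ x.val = s := by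
  have h : f x = ⟨c, .refl⟩ ↔ x = ⟨s, .refl⟩ := by rw [← hf.apply_root, f.apply_eq_iff_eq]
  simpa only [Subtype.ext_iff] using h

theorem sigParent_iff (hf : IsSubtreeIso f) (x y : F.desc s) :
    F.SigParent SB x y ↔ F.SigParent SB (f x) (f y) := by
  simp only [SigParent, SigAdj, ne_eq, Subtype.val_inj, f.apply_eq_iff_eq, ← hf.parent_iff,
    ← hf.b_iff]

theorem atp1_eq (hf : IsSubtreeIso f) (x : F.desc s) :
    atp1 F.toStr SU SB x.val = atp1 F.toStr SU SB (f x).val :=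
  atp1_eq_iff.2 ⟨fun P _ => hf.u_iff P x, fun R _ => hf.b_iff R x x⟩

theorem atp2_eq (hf : IsSubtreeIso f) (x y : F.desc s) :
    atp2 F.toStr SU SB x.val y.val = atp2 F.toStr SU SB (f x).val (f y).val :=
  atp2_eq_iff.2 ⟨hf.atp1_eq x, hf.atp1_eq y, fun R _ => ⟨hf.b_iff R x y, hf.b_iff R y x⟩⟩

theorem exists_steps (hf : IsSubtreeIso f) {n : ℕ} {y : F.Dom}
    (h : Steps (F.SigParent SB) n c y) :
    ∃ x : F.desc s, (f x).val = y ∧ Steps (F.SigParent SB) n s x := by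
  induction n generalizing y with
  | zero => exact ⟨⟨s, .refl⟩, hf.root.trans h, rfl⟩
  | succ n ih =>
    obtain ⟨z, hcz, hzy⟩ := h
    obtain ⟨x, rfl, hsx⟩ := ih hcz
    have hy : y ∈ F.desc c := Relation.ReflTransGen.tail (f x).2 hzy.1
    obtain ⟨x', hx'⟩ := f.surjective ⟨y, hy⟩
    obtain rfl : (f x').val = y := congrArg Subtype.val hx'
    exact ⟨x', rfl, x, hsx, (hf.sigParent_iff x x').2 hzy⟩

/-- Σ-edges leave a subtree only through its root; so bisimilarity is transferred along a subtree
isomorphism if the root is exempted, or if neither root has such an edge. -/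
theorem kDelimBisim {M : Str U B} {D : Set F.Dom} (hf : IsSubtreeIso f)
    (hroot : s ∈ D ∨ (∀ p, ¬ F.SigParent SB p s) ∧ ∀ p, ¬ F.SigParent SB p c) {k : ℕ}
    {x : F.desc s} {b : M.Dom} (h : KBisim F.toStr M SU SB k (f x).val b) :
    KDelimBisim F.toStr M SU SB D k x.val b := by
  induction k generalizing x b with
  | zero => exact (hf.atp1_eq x).trans h
  | succ k ih =>
    refine ⟨(hf.atp1_eq x).trans h.1, fun hxD => ⟨fun x' hne hg => ?_, fun b' hne hg => ?_⟩⟩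
    · have hx' : x' ∈ F.desc s := (mem_desc_or_sigParent x.2 hne hg).resolve_right
        fun ⟨hxs, hp⟩ => hroot.elim (hxs ▸ hxD) fun h => h.1 x' hp
      have hat := hf.atp2_eq (SU := SU) (SB := SB) x ⟨x', hx'⟩
      obtain ⟨b', hb', hat', hk⟩ := h.2.1 (f ⟨x', hx'⟩)
        (fun he => hne (congrArg Subtype.val (f.injective (Subtype.ext he))))
        ((guarded2_iff_of_atp2_eq hat).1 hg)
      exact ⟨b', hb', hat.trans hat', ih hk⟩
    · obtain ⟨y', hne', hat, hk⟩ := h.2.2 b' hne hg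
      have hy' : y' ∈ F.desc c :=
        (mem_desc_or_sigParent (f x).2 hne' ((guarded2_iff_of_atp2_eq hat).2 hg)).resolve_right
          fun ⟨hxc, hp⟩ => hroot.elim ((hf.eq_root_iff x).1 hxc ▸ hxD) fun h => h.2 y' hp
      obtain ⟨x', hx'⟩ := f.surjective ⟨y', hy'⟩
      obtain rfl : (f x').val = y' := congrArg Subtype.val hx'
      exact ⟨x', fun he => hne' (congrArg (fun z => (f z).val) (Subtype.ext he)),
        (hf.atp2_eq x x').trans hat, ih hk⟩

end IsSubtreeIso

end Forest

theorem Steps.exists_root_of_not_exists {D : Type} {r : D → D → Prop} {a : D} {N : ℕ}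
    (h : ¬ ∃ c, Steps r N c a) : ∃ c, (∃ m < N, Steps r m c a) ∧ ∀ p, ¬ r p c := by
  induction N with
  | zero => exact absurd ⟨a, rfl⟩ h
  | succ N ih =>
    by_cases hc : ∃ c, Steps r N c a
    · obtain ⟨c, hc⟩ := hc
      exact ⟨c, ⟨N, N.lt_succ_self, hc⟩,
        fun p hp => h ⟨p, Nat.add_comm 1 N ▸ (Steps.single hp).trans hc⟩⟩
    · obtain ⟨c, ⟨m, hm, hs⟩, hroot⟩ := ih hc
      exact ⟨c, ⟨m, Nat.lt_succ_of_lt hm, hs⟩, hroot⟩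

end

section

/-! ### Characteristic formulas -/

variable {U B : Type} {SU : Set U} {SB : Set B} {V : Set Var}

/-- GF² formulas over the signature `(SU, SB)` with free variables in `V`. -/
structure IsGF2Over (SU : Set U) (SB : Set B) (V : Set Var) (φ : Fml U B) : Prop where
  isGF2 : IsGF2 φ
  free_subset : φ.free ⊆ V
  upreds_subset : φ.upreds ⊆ SU
  bpreds_subset : φ.bpreds ⊆ SB

namespace IsGF2Over

variable {φ ψ : Fml U B}

theorem mono {W : Set Var} (h : IsGF2Over SU SB V φ) (hVW : V ⊆ W) : IsGF2Over SU SB W φ :=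
  { h with free_subset := h.free_subset.trans hVW }

theorem neg (h : IsGF2Over SU SB V φ) : IsGF2Over SU SB V φ.neg :=
  { h with isGF2 := .neg h.isGF2 }

theorem conj (hφ : IsGF2Over SU SB V φ) (hψ : IsGF2Over SU SB V ψ) :
    IsGF2Over SU SB V (φ.conj ψ) where
  isGF2 := .conj hφ.isGF2 hψ.isGF2
  free_subset := Set.union_subset hφ.free_subset hψ.free_subset
  upreds_subset := Set.union_subset hφ.upreds_subset hψ.upreds_subset
  bpreds_subset := Set.union_subset hφ.bpreds_subset hψ.bpreds_subset

theorem ex_conj {α : Fml U B} {v : Var} (hα : IsGF2Over SU SB V α) (hφ : IsGF2Over SU SB V φ)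
    (hatom : α.IsAtom) (hv : v ∈ V) (hV : V ⊆ α.free) :
    IsGF2Over SU SB (V \ {v}) (.ex v (α.conj φ)) :=
  have hguard : φ.free ∪ {v} ⊆ α.free :=
    (Set.union_subset hφ.free_subset (Set.singleton_subset_iff.2 hv)).trans hV
  { hα.conj hφ with
    isGF2 := .exG hatom hφ.isGF2 hguard
    free_subset := Set.sdiff_subset_sdiff_left (hα.conj hφ).free_subset }

theorem isGF2Sentence (h : IsGF2Over SU SB ∅ φ) : IsGF2Sentence SU SB φ :=
  ⟨h.isGF2, Set.subset_empty_iff.1 h.free_subset, h.upreds_subset, h.bpreds_subset⟩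

end IsGF2Over

theorem exists_sat_iff_forall_sat_iff_mem {Φ : Set (Fml U B)} (hfin : Φ.Finite)
    (hΦ : ∀ φ ∈ Φ, IsGF2Over SU SB V φ) (S : Set (Fml U B)) :
    ∃ χ, IsGF2Over SU SB V χ ∧ ∀ (A : Str U B) (σ : Var → A.Dom),
      Sat A χ σ ↔ ∀ φ ∈ Φ, (Sat A φ σ ↔ φ ∈ S) := by
  induction Φ, hfin using Set.Finite.induction_on with
  | empty =>
    exact ⟨.neg .fls, ⟨.neg .fls, Set.empty_subset _, Set.empty_subset _, Set.empty_subset _⟩,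
      by simp [Sat]⟩
  | @insert φ Φ _ _ ih =>
    obtain ⟨χ, hχ, hsat⟩ := ih fun ψ hψ => hΦ ψ (.inr hψ)
    have hφ := hΦ φ (.inl rfl)
    by_cases hS : φ ∈ S
    · exact ⟨φ.conj χ, hφ.conj hχ, fun A σ => by simp [Sat, hsat, hS]⟩
    · exact ⟨φ.neg.conj χ, hφ.neg.conj hχ, fun A σ => by simp [Sat, hsat, hS]⟩

theorem exists_finite_sat_iff_agreeOn {Φ : Set (Fml U B)} (hfin : Φ.Finite)
    (hΦ : ∀ φ ∈ Φ, IsGF2Over SU SB V φ) :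
    ∃ X : Set (Fml U B), X.Finite ∧ (∀ χ ∈ X, IsGF2Over SU SB V χ) ∧
      ∀ (A : Str U B) (σ : Var → A.Dom), ∃ χ ∈ X, ∀ (M : Str U B) (τ : Var → M.Dom),
        Sat M χ τ ↔ AgreeOn A M Φ σ τ := by
  choose χ hχ hsat using exists_sat_iff_forall_sat_iff_mem hfin hΦ
  refine ⟨χ '' 𝒫 Φ, hfin.finite_subsets.image χ, Set.forall_mem_image.2 fun S _ => hχ S,
    fun A σ => ⟨χ {φ ∈ Φ | Sat A φ σ}, ⟨_, fun φ hφ => hφ.1, rfl⟩, fun M τ => ?_⟩⟩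
  rw [hsat]
  exact forall₂_congr fun φ hφ => by
    rw [Set.mem_sep_iff, and_iff_right hφ]
    exact Iff.comm

/-- The atomic formulas over the signature `(SU, SB)`. -/
def sigAtoms (SU : Set U) (SB : Set B) : Set (Fml U B) :=
  {α | α.IsAtom ∧ α.upreds ⊆ SU ∧ α.bpreds ⊆ SB}

theorem uatom_mem_sigAtoms {P : U} (hP : P ∈ SU) (v : Var) : .uatom P v ∈ sigAtoms SU SB :=
  ⟨trivial, Set.singleton_subset_iff.2 hP, Set.empty_subset _⟩

theorem batom_mem_sigAtoms {R : B} (hR : R ∈ SB) (v w : Var) : .batom R v w ∈ sigAtoms SU SB :=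
  ⟨trivial, Set.empty_subset _, Set.singleton_subset_iff.2 hR⟩

theorem eqv_mem_sigAtoms (v w : Var) : .eqv v w ∈ sigAtoms SU SB :=
  ⟨trivial, Set.empty_subset _, Set.empty_subset _⟩

theorem isGF2Over_of_mem_sigAtoms {α : Fml U B} (h : α ∈ sigAtoms SU SB) :
    IsGF2Over SU SB α.free α := by
  refine ⟨?_, subset_rfl, h.2.1, h.2.2⟩
  cases α with
  | uatom P v => exact .uatom P v
  | batom R v w => exact .batom R v w
  | eqv v w => exact .eqv v w
  | _ => exact h.1.elim

theorem finite_sigAtoms (hSU : SU.Finite) (hSB : SB.Finite) :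
    (sigAtoms SU SB : Set (Fml U B)).Finite := by
  have hVar : (Set.univ : Set Var).Finite := Set.finite_univ
  refine (((hSU.prod hVar).image fun p => Fml.uatom p.1 p.2).union
    (((hSB.prod (hVar.prod hVar)).image fun p => Fml.batom p.1 p.2.1 p.2.2).union
      ((hVar.prod hVar).image fun p => Fml.eqv p.1 p.2))).subset ?_
  rintro (⟨P, v⟩ | ⟨R, v, w⟩ | ⟨v, w⟩ | _ | _ | _ | _ | _ | _ | _) ⟨hatom, hu, hb⟩
  · exact .inl ⟨(P, v), ⟨hu rfl, trivial⟩, rfl⟩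
  · exact .inr (.inl ⟨(R, v, w), ⟨hb rfl, trivial, trivial⟩, rfl⟩)
  · exact .inr (.inr ⟨(v, w), ⟨trivial, trivial⟩, rfl⟩)
  all_goals exact hatom.elim

variable {A M : Str U B} {σ : Var → A.Dom} {τ : Var → M.Dom}

theorem AgreeOn.mono {Φ Γ : Set (Fml U B)} (h : AgreeOn A M Γ σ τ) (hΦ : Φ ⊆ Γ) :
    AgreeOn A M Φ σ τ := fun φ hφ => h φ (hΦ hφ)

theorem AgreeOn.congr {Φ : Set (Fml U B)} (hΦ : ∀ φ ∈ Φ, IsGF2Over SU SB V φ)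
    {σ' : Var → A.Dom} {τ' : Var → M.Dom} (hσ : ∀ v ∈ V, σ v = σ' v) (hτ : ∀ v ∈ V, τ v = τ' v)
    (h : AgreeOn A M Φ σ τ) : AgreeOn A M Φ σ' τ' := fun φ hφ =>
  have hfree := (hΦ φ hφ).free_subset
  (sat_congr fun v hv => (hσ v (hfree hv)).symm).trans
    ((h φ hφ).trans (sat_congr fun v hv => hτ v (hfree hv)))

theorem AgreeOn.atp2_eq (h : AgreeOn A M (sigAtoms SU SB) σ τ) (v w : Var) :
    atp2 A SU SB (σ v) (σ w) = atp2 M SU SB (τ v) (τ w) := by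
  have hu (v) (P) (hP : P ∈ SU) := h _ (uatom_mem_sigAtoms hP v)
  have hb (v w) (R) (hR : R ∈ SB) := h _ (batom_mem_sigAtoms hR v w)
  exact atp2_eq_iff.2 ⟨atp1_eq_iff.2 ⟨hu v, hb v v⟩, atp1_eq_iff.2 ⟨hu w, hb w w⟩,
    fun R hR => ⟨hb v w R hR, hb w v R hR⟩⟩

theorem exists_finite_determining_guarded_extension (hSB : SB.Finite) {v w : Var} (hwv : w ≠ v)
    {Ψ : Set (Fml U B)} (hfin : Ψ.Finite) (hΨ : ∀ ψ ∈ Ψ, IsGF2Over SU SB Set.univ ψ) :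
    ∃ Θ : Set (Fml U B), Θ.Finite ∧ (∀ θ ∈ Θ, IsGF2Over SU SB {v} θ) ∧
      ∀ (A M : Str U B) (a : A.Dom) (m : M.Dom), AgreeOn A M Θ (fun _ => a) (fun _ => m) →
        ∀ a', Guarded2 A SB a a' →
          ∃ m', AgreeOn A M Ψ (upd (fun _ => a) w a') (upd (fun _ => m) w m') := by
  obtain ⟨X, hXfin, hX, hchar⟩ := exists_finite_sat_iff_agreeOn hfin hΨ
  let guards : Set (Fml U B) := (fun R => .batom R v w) '' SB ∪ (fun R => .batom R w v) '' SB
  have guards_spec : ∀ α ∈ guards, α ∈ sigAtoms SU SB ∧ Set.univ ⊆ α.free := by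
    rintro _ (⟨R, hR, rfl⟩ | ⟨R, hR, rfl⟩)
    exacts [⟨batom_mem_sigAtoms hR v w, fun u _ => Var.eq_or_eq hwv u⟩,
      ⟨batom_mem_sigAtoms hR w v, fun u _ => (Var.eq_or_eq hwv u).symm⟩]
  have exists_guard {A : Str U B} {a a' : A.Dom} (hg : Guarded2 A SB a a') :
      ∃ α ∈ guards, Sat A α (upd (fun _ => a) w a') := by
    obtain ⟨R, hR, hb | hb⟩ := hg
    · exact ⟨_, .inl ⟨R, hR, rfl⟩, by simpa [Sat, upd, hwv.symm] using hb⟩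
    · exact ⟨_, .inr ⟨R, hR, rfl⟩, by simpa [Sat, upd, hwv.symm] using hb⟩
  refine ⟨Set.image2 (fun α χ => .ex w (α.conj χ)) guards X,
    ((hSB.image _).union (hSB.image _)).image2 _ hXfin, ?_, fun A M a m h a' hg => ?_⟩
  · rintro _ ⟨α, hα, χ, hχ, rfl⟩
    obtain ⟨hαsig, hfree⟩ := guards_spec α hα
    exact (IsGF2Over.ex_conj ((isGF2Over_of_mem_sigAtoms hαsig).mono (Set.subset_univ _))
      (hX χ hχ) hαsig.1 trivial hfree).mono fun u hu => (Var.eq_or_eq hwv u).resolve_right hu.2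
  · obtain ⟨α, hα, hsatα⟩ := exists_guard hg
    obtain ⟨χ, hχ, hsatχ⟩ := hchar A (upd (fun _ => a) w a')
    obtain ⟨m', -, hm'⟩ := (h _ ⟨α, hα, χ, hχ, rfl⟩).1 ⟨a', hsatα, (hsatχ A _).2 (.refl _)⟩
    exact ⟨m', (hsatχ M _).1 hm'⟩

theorem exists_finite_determining_guarded_step (hSU : SU.Finite) (hSB : SB.Finite) {v w : Var}
    (hwv : w ≠ v) {Φ : Set (Fml U B)} (hfin : Φ.Finite) (hΦ : ∀ φ ∈ Φ, IsGF2Over SU SB {w} φ) :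
    ∃ Θ : Set (Fml U B), Θ.Finite ∧ (∀ θ ∈ Θ, IsGF2Over SU SB {v} θ) ∧
      ∀ (A M : Str U B) (a : A.Dom) (m : M.Dom), AgreeOn A M Θ (fun _ => a) (fun _ => m) →
        ∀ a', a' ≠ a → Guarded2 A SB a a' → ∃ m', m' ≠ m ∧
          atp2 A SU SB a a' = atp2 M SU SB m m' ∧ AgreeOn A M Φ (fun _ => a') fun _ => m' := by
  obtain ⟨Θ, hΘfin, hΘ, hext⟩ := exists_finite_determining_guarded_extension hSB hwv
    ((finite_sigAtoms hSU hSB).union hfin) (SU := SU) fun ψ hψ => hψ.elim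
      (fun h => (isGF2Over_of_mem_sigAtoms h).mono (Set.subset_univ _))
      (fun h => (hΦ ψ h).mono (Set.subset_univ _))
  refine ⟨Θ, hΘfin, hΘ, fun A M a m h a' hne hg => ?_⟩
  obtain ⟨m', hm'⟩ := hext A M a m h a' hg
  have hatoms := hm'.mono Set.subset_union_left
  have hat := hatoms.atp2_eq v w
  have heq : a' = a ↔ m' = m := by
    simpa [Sat, upd_of_ne _ hwv.symm] using hatoms _ (eqv_mem_sigAtoms w v)
  refine ⟨m', mt heq.2 hne, by simpa [upd_of_ne _ hwv.symm] using hat,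
    (hm'.mono Set.subset_union_right).congr hΦ ?_ ?_⟩ <;> rintro _ rfl <;> exact upd_self ..

theorem exists_finite_determining_kBisim (hSU : SU.Finite) (hSB : SB.Finite) (k : ℕ) (v : Var) :
    ∃ Φ : Set (Fml U B), Φ.Finite ∧ (∀ φ ∈ Φ, IsGF2Over SU SB {v} φ) ∧
      ∀ (A M : Str U B) (a : A.Dom) (m : M.Dom), AgreeOn A M Φ (fun _ => a) (fun _ => m) →
        KBisim A M SU SB k a m := by
  let atoms (v : Var) : Set (Fml U B) := {α ∈ sigAtoms SU SB | α.free ⊆ {v}}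
  have atoms_fin (v) : (atoms v).Finite := (finite_sigAtoms hSU hSB).subset fun α hα => hα.1
  have atoms_over (v) : ∀ α ∈ atoms v, IsGF2Over SU SB {v} α := fun α hα =>
    (isGF2Over_of_mem_sigAtoms hα.1).mono hα.2
  have atp1_eq {A M : Str U B} {v a m} (h : AgreeOn A M (atoms v) (fun _ => a) fun _ => m) :
      atp1 A SU SB a = atp1 M SU SB m :=
    AgreeOn.atp1_eq (Γ := atoms v) (fun P hP => ⟨v, uatom_mem_sigAtoms hP v, subset_rfl⟩)
      (fun R hR => ⟨v, v, batom_mem_sigAtoms hR v v, by simp [Fml.free]⟩) h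
  induction k generalizing v with
  | zero => exact ⟨atoms v, atoms_fin v, atoms_over v, fun A M a m h => atp1_eq h⟩
  | succ k ih =>
    obtain ⟨w, hwv⟩ : ∃ w : Var, w ≠ v := by cases v; exacts [⟨.y, nofun⟩, ⟨.x, nofun⟩]
    obtain ⟨Φ, hΦfin, hΦ, hdet⟩ := ih w
    obtain ⟨Θ, hΘfin, hΘ, hstep⟩ :=
      exists_finite_determining_guarded_step hSU hSB hwv hΦfin hΦ
    refine ⟨atoms v ∪ Θ, (atoms_fin v).union hΘfin,
      fun φ hφ => hφ.elim (atoms_over v φ) (hΘ φ), fun A M a m h => ?_⟩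
    have hΘm := h.mono Set.subset_union_right
    refine ⟨atp1_eq (h.mono Set.subset_union_left), fun a' hne hg => ?_, fun m' hne hg => ?_⟩
    · obtain ⟨m', hm', hat, hagree⟩ := hstep A M a m hΘm a' hne hg
      exact ⟨m', hm', hat, hdet A M a' m' hagree⟩
    · obtain ⟨a', ha', hat, hagree⟩ := hstep M A m a hΘm.symm m' hne hg
      exact ⟨a', ha', hat.symm, hdet A M a' m' hagree.symm⟩

theorem exists_finite_sentences_determining_realization {Φ : Set (Fml U B)} {v : Var}
    (hfin : Φ.Finite) (hΦ : ∀ φ ∈ Φ, IsGF2Over SU SB {v} φ) :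
    ∃ Θ : Set (Fml U B), Θ.Finite ∧ (∀ θ ∈ Θ, IsGF2Over SU SB ∅ θ) ∧
      ∀ (A M : Str U B) (σ : Var → A.Dom) (τ : Var → M.Dom), AgreeOn A M Θ σ τ →
        ∀ a, ∃ m, AgreeOn A M Φ (fun _ => a) fun _ => m := by
  obtain ⟨X, hXfin, hX, hchar⟩ := exists_finite_sat_iff_agreeOn hfin hΦ
  have hself : IsGF2Over SU SB {v} (.eqv v v) :=
    (isGF2Over_of_mem_sigAtoms (eqv_mem_sigAtoms v v)).mono (by simp [Fml.free])
  refine ⟨(fun χ => .ex v (.conj (.eqv v v) χ)) '' X, hXfin.image _,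
    Set.forall_mem_image.2 fun χ hχ =>
      (hself.ex_conj (hX χ hχ) trivial rfl Set.subset_union_left).mono (by simp),
    fun A M σ τ h a => ?_⟩
  obtain ⟨χ, hχ, hsat⟩ := hchar A fun _ => a
  have hsatA : Sat A χ (upd σ v a) :=
    (sat_congr fun u hu => by rw [(hX χ hχ).free_subset hu, upd_self]).2 ((hsat A _).2 (.refl _))
  obtain ⟨m, -, hm⟩ := (h _ ⟨χ, hχ, rfl⟩).1 ⟨a, rfl, hsatA⟩
  refine ⟨m, (hsat M _).1 ((sat_congr fun u hu => ?_).1 hm)⟩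
  rw [(hX χ hχ).free_subset hu, upd_self]

theorem exists_characteristic_sentence (hSU : SU.Finite) (hSB : SB.Finite) (A : Str U B) (k : ℕ) :
    ∃ χ, IsGF2Sentence SU SB χ ∧ SatS A χ ∧
      ∀ M : Str U B, SatS M χ → GlobalKBisim A M SU SB k := by
  obtain ⟨Φ, hΦfin, hΦ, hdet⟩ := exists_finite_determining_kBisim (U := U) hSU hSB k .x
  obtain ⟨Θ, hΘfin, hΘ, hreal⟩ := exists_finite_sentences_determining_realization hΦfin hΦ
  obtain ⟨X, -, hX, hchar⟩ := exists_finite_sat_iff_agreeOn hΘfin hΘ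
  obtain ⟨a₀⟩ := A.nonempty
  obtain ⟨χ, hχ, hsat⟩ := hchar A fun _ => a₀
  have hsent := (hX χ hχ).isGF2Sentence
  refine ⟨χ, hsent, (satS_iff_sat hsent.2.1 _).2 ((hsat A _).2 (.refl _)), fun M hM => ?_⟩
  obtain ⟨m₀⟩ := M.nonempty
  have hagree := (hsat M _).1 (hM fun _ => m₀)
  exact {
    exists_right a := (hreal A M _ _ hagree a).imp fun m => hdet A M a m
    exists_left m := (hreal M A _ _ hagree.symm m).imp fun a h => hdet A M a m h.symm }

end

section

/-! ### Ultraproducts -/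

open Filter

variable {U B : Type}

/-- The ultraproduct of the structures `C n` modulo `V`; atoms are evaluated on chosen
representatives of the classes of sequences. -/
def ultraproduct {ι : Type} (V : Ultrafilter ι) (C : ι → Str U B) : Str U B where
  Dom := (V : Filter ι).Product fun n => (C n).Dom
  nonempty := ⟨Quotient.mk _ fun n => (C n).nonempty.some⟩
  u P q := ∀ᶠ n in V, (C n).u P (q.out n)
  b R q q' := ∀ᶠ n in V, (C n).b R (q.out n) (q'.out n)

namespace ultraproduct

section

variable {ι : Type} {V : Ultrafilter ι} {C : ι → Str U B}

/-- A sequence representing the element `q` of an ultraproduct. -/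
noncomputable def rep (q : (ultraproduct V C).Dom) : ∀ n, (C n).Dom := Quotient.out q

theorem eq_iff_eventually_rep_eq {q q' : (ultraproduct V C).Dom} :
    q = q' ↔ ∀ᶠ n in V, rep q n = rep q' n :=
  Quotient.out_equiv_out.symm

theorem exists_eventually_rep_eq (f : ∀ n, (C n).Dom) :
    ∃ q : (ultraproduct V C).Dom, ∀ᶠ n in V, rep q n = f n :=
  ⟨Quotient.mk _ f, Quotient.mk_out (s := productSetoid _ _) f⟩

theorem exists_eventually_rep {P : ∀ n, (C n).Dom → Prop} (h : ∀ᶠ n in V, ∃ d, P n d) :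
    ∃ q : (ultraproduct V C).Dom, ∀ᶠ n in V, P n (rep q n) := by
  obtain ⟨q, hq⟩ := exists_eventually_rep_eq (V := V) fun n => Classical.epsilon (P n)
  refine ⟨q, ?_⟩
  filter_upwards [h, hq] with n hn hqn
  exact hqn ▸ Classical.epsilon_spec hn

theorem rep_upd (σ : Var → (ultraproduct V C).Dom) (v : Var) (q : (ultraproduct V C).Dom) (n : ι) :
    (fun u => rep (upd σ v q u) n) = upd (fun u => rep (σ u) n) v (rep q n) := by
  funext u
  by_cases h : u = v <;> simp [upd, h]

/-- Łoś's theorem. -/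
theorem sat_iff {φ : Fml U B} {σ : Var → (ultraproduct V C).Dom} :
    Sat (ultraproduct V C) φ σ ↔ ∀ᶠ n in V, Sat (C n) φ fun v => rep (σ v) n := by
  have exists_iff {P : ∀ n, (C n).Dom → Prop} :
      (∃ q : (ultraproduct V C).Dom, ∀ᶠ n in V, P n (rep q n)) ↔ ∀ᶠ n in V, ∃ d, P n d :=
    ⟨fun ⟨q, hq⟩ => hq.mono fun n hn => ⟨_, hn⟩, exists_eventually_rep⟩
  induction φ generalizing σ with
  | uatom P v => rfl
  | batom R v w => rfl
  | eqv v w => exact eq_iff_eventually_rep_eq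
  | fls => simp [Sat, V.neBot.ne]
  | neg φ ih => simp only [Sat, ih, Ultrafilter.eventually_not]
  | conj φ ψ ihφ ihψ => simp only [Sat, ihφ, ihψ, eventually_and]
  | disj φ ψ ihφ ihψ => simp only [Sat, ihφ, ihψ, Ultrafilter.eventually_or]
  | impl φ ψ ihφ ihψ => simp only [Sat, ihφ, ihψ, Ultrafilter.eventually_imp]
  | ex v φ ih =>
    simp only [Sat, ih, rep_upd]
    exact exists_iff (P := fun n d => Sat (C n) φ (upd (fun u => rep (σ u) n) v d))
  | all v φ ih =>
    simp only [Sat, ih, rep_upd]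
    rw [← not_iff_not, not_forall, ← Ultrafilter.eventually_not]
    simp only [← Ultrafilter.eventually_not, not_forall]
    exact exists_iff (P := fun n d => ¬ Sat (C n) φ (upd (fun u => rep (σ u) n) v d))

theorem satS {φ : Fml U B} (h : ∀ n, SatS (C n) φ) : SatS (ultraproduct V C) φ :=
  fun _ => sat_iff.2 (.of_forall fun n => h n _)

variable {A : Str U B} {SU : Set U} {SB : Set B} {a a' : A.Dom} {q q' : (ultraproduct V C).Dom}

theorem atp1_eq_of_eventually (h : ∀ᶠ n in V, atp1 A SU SB a = atp1 (C n) SU SB (rep q n)) :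
    atp1 A SU SB a = atp1 (ultraproduct V C) SU SB q := by
  simp only [atp1_eq_iff] at h ⊢
  exact ⟨fun P hP => eventually_const.symm.trans (eventually_congr (h.mono fun n hn => hn.1 P hP)),
    fun R hR => eventually_const.symm.trans (eventually_congr (h.mono fun n hn => hn.2 R hR))⟩

theorem atp2_eq_of_eventually
    (h : ∀ᶠ n in V, atp2 A SU SB a a' = atp2 (C n) SU SB (rep q n) (rep q' n)) :
    atp2 A SU SB a a' = atp2 (ultraproduct V C) SU SB q q' := by
  simp only [atp2_eq_iff] at h ⊢
  exact ⟨atp1_eq_of_eventually (h.mono fun n hn => hn.1),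
    atp1_eq_of_eventually (h.mono fun n hn => hn.2.1), fun R hR =>
      ⟨eventually_const.symm.trans (eventually_congr (h.mono fun n hn => (hn.2.2 R hR).1)),
        eventually_const.symm.trans (eventually_congr (h.mono fun n hn => (hn.2.2 R hR).2))⟩⟩

theorem eventually_guarded2 (h : Guarded2 (ultraproduct V C) SB q q') :
    ∀ᶠ n in V, Guarded2 (C n) SB (rep q n) (rep q' n) := by
  obtain ⟨R, hR, hb | hb⟩ := h
  · exact Eventually.mono hb fun n hn => ⟨R, hR, .inl hn⟩
  · exact Eventually.mono hb fun n hn => ⟨R, hR, .inr hn⟩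

end

variable {V : Ultrafilter ℕ} {C : ℕ → Str U B}

theorem exists_forall_eventually_rep (hV : (V : Filter ℕ) ≤ atTop)
    {P : ℕ → ∀ n, (C n).Dom → Prop} (hP : ∀ {k n d}, P (k + 1) n d → P k n d)
    (h : ∀ k, ∀ᶠ n in V, ∃ d, P k n d) :
    ∃ q : (ultraproduct V C).Dom, ∀ k, ∀ᶠ n in V, P k n (rep q n) := by
  classical
  let m (n : ℕ) : ℕ := Nat.findGreatest (fun k => ∃ d, P k n d) n
  have hm : ∀ᶠ n in V, ∃ d, P (m n) n d :=
    (h 0).mono fun n hn => Nat.findGreatest_spec (P := fun k => ∃ d, P k n d) n.zero_le hn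
  obtain ⟨q, hq⟩ := exists_eventually_rep (P := fun n => P (m n) n) hm
  refine ⟨q, fun k => ?_⟩
  filter_upwards [hq, h k, hV (eventually_ge_atTop k)] with n hn hk hkn
  have hkm : k ≤ m n := Nat.le_findGreatest hkn hk
  exact antitone_nat_of_succ_le (f := fun k => P k n (rep q n)) (fun _ => hP) hkm hn

end ultraproduct

theorem exists_mem_frequently {ι α : Type} {l : Filter ι} [NeBot l] {S : Set α} (hS : S.Finite)
    {P : ι → α → Prop} (h : ∀ i, ∃ a ∈ S, P i a) : ∃ a ∈ S, ∃ᶠ i in l, P i a := by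
  by_contra! hn
  obtain ⟨i, hi⟩ := ((eventually_all_finite hS).2 hn).exists
  obtain ⟨a, ha, hP⟩ := h i
  exact hi a ha hP

/-- `a` is delimited bisimilar for any number of rounds to `V`-almost all components of `q`. -/
def LimitBisim {V : Ultrafilter ℕ} {C : ℕ → Str U B} (A : Str U B) (SU : Set U) (SB : Set B)
    (D : Set A.Dom) (a : A.Dom) (q : (ultraproduct V C).Dom) : Prop :=
  ∀ k, ∀ᶠ n in V, KDelimBisim A (C n) SU SB D k a (ultraproduct.rep q n)

namespace LimitBisim

open ultraproduct

variable {V : Ultrafilter ℕ} {C : ℕ → Str U B} {A : Str U B} {SU : Set U} {SB : Set B}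
  {D : Set A.Dom} {a : A.Dom} {q : (ultraproduct V C).Dom}

theorem atp1_eq (h : LimitBisim A SU SB D a q) :
    atp1 A SU SB a = atp1 (ultraproduct V C) SU SB q :=
  atp1_eq_of_eventually (h 0)

theorem forth (hV : (V : Filter ℕ) ≤ atTop) (h : LimitBisim A SU SB D a q) (ha : a ∉ D)
    (a' : A.Dom) (hne : a' ≠ a) (hg : Guarded2 A SB a a') :
    ∃ q', q' ≠ q ∧ atp2 A SU SB a a' = atp2 (ultraproduct V C) SU SB q q' ∧
      LimitBisim A SU SB D a' q' := by
  obtain ⟨q', hq'⟩ := exists_forall_eventually_rep hV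
    (P := fun k n b' => b' ≠ rep q n ∧ atp2 A SU SB a a' = atp2 (C n) SU SB (rep q n) b' ∧
      KDelimBisim A (C n) SU SB D k a' b')
    (fun h => ⟨h.1, h.2.1, h.2.2.of_succ⟩)
    fun k => (h (k + 1)).mono fun n hn => (hn.2 ha).1 a' hne hg
  refine ⟨q', fun heq => ?_, atp2_eq_of_eventually ((hq' 0).mono fun n hn => hn.2.1),
    fun k => (hq' k).mono fun n hn => hn.2.2⟩
  obtain ⟨n, hn⟩ := (hq' 0).exists
  exact hn.1 (by rw [heq])

theorem back (hA : FiniteOutdeg A) (h : LimitBisim A SU SB D a q) (ha : a ∉ D)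
    (q' : (ultraproduct V C).Dom) (hne : q' ≠ q) (hg : Guarded2 (ultraproduct V C) SB q q') :
    ∃ a', a' ≠ a ∧ atp2 A SU SB a a' = atp2 (ultraproduct V C) SU SB q q' ∧
      LimitBisim A SU SB D a' q' := by
  have hrep_ne : ∀ᶠ n in V, rep q' n ≠ rep q n :=
    Ultrafilter.eventually_not.2 fun h => hne (eq_iff_eventually_rep_eq.2 h)
  have hanswer (k : ℕ) : ∃ a' ∈ {a' | a' ≠ a ∧ ∃ R, A.b R a a' ∨ A.b R a' a}, ∀ᶠ n in V,
      atp2 A SU SB a a' = atp2 (C n) SU SB (rep q n) (rep q' n) ∧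
        KDelimBisim A (C n) SU SB D k a' (rep q' n) := by
    refine (Ultrafilter.eventually_exists_mem_iff (hA a)).1 ?_
    filter_upwards [h (k + 1), hrep_ne, eventually_guarded2 hg] with n hn hnen hgn
    obtain ⟨a', ha', hat, hk⟩ := (hn.2 ha).2 _ hnen hgn
    exact ⟨a', ⟨ha', ((guarded2_iff_of_atp2_eq hat).2 hgn).imp fun R => And.right⟩, hat, hk⟩
  obtain ⟨a', ha', hfreq⟩ := exists_mem_frequently (l := atTop) (hA a) hanswer
  refine ⟨a', ha'.1, ?_, fun k => ?_⟩
  · obtain ⟨k, hk⟩ := hfreq.exists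
    exact atp2_eq_of_eventually (hk.mono fun n hn => hn.1)
  · obtain ⟨l, hkl, hl⟩ := frequently_atTop.1 hfreq k
    exact hl.mono fun n hn => hn.2.mono hkl

theorem bisim (hV : (V : Filter ℕ) ≤ atTop) (hA : FiniteOutdeg A)
    (h : LimitBisim A SU SB ∅ a q) : Bisim A (ultraproduct V C) SU SB a q :=
  ⟨LimitBisim A SU SB ∅, ⟨atp1_eq, fun h => h.forth hV id, fun h => h.back hA id⟩, h⟩

theorem ptDelimBisim (hV : (V : Filter ℕ) ≤ atTop) (hA : FiniteOutdeg A) {abot : A.Dom}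
    (h : LimitBisim A SU SB {abot} a q) : PtDelimBisim A (ultraproduct V C) SU SB abot a q :=
  ⟨LimitBisim A SU SB {abot}, ⟨atp1_eq, fun h => h.forth hV, fun h => h.back hA⟩, h⟩

end LimitBisim

end

section

/-! ### From entailment to delimited bisimulations -/

open Filter ultraproduct

theorem Steps.exists_path_of_frequently {D : Type} {r : D → D → Prop}
    (hr : ∀ d, {x | r d x}.Finite) {P : D → Prop} {s : D}
    (h : ∃ᶠ N in atTop, ∃ a, Steps r N s a ∧ P a) :
    ∃ d : ℕ → D, d 0 = s ∧ (∀ i, r (d i) (d (i + 1))) ∧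
      ∀ i, ∃ᶠ N in atTop, ∃ a, Steps r N (d i) a ∧ P a := by
  let IsDeep (s : D) : Prop := ∃ᶠ N in atTop, ∃ a, Steps r N s a ∧ P a
  have exists_next (s : {s // IsDeep s}) : ∃ t : {s // IsDeep s}, r s t := by
    have exists_child (M : ℕ) : ∃ t ∈ {x | r s x}, ∃ N ≥ M, ∃ a, Steps r N t a ∧ P a := by
      obtain ⟨N, hN, a, hsa, ha⟩ := frequently_atTop.1 s.2 (M + 1)
      obtain ⟨N, rfl⟩ := Nat.exists_eq_add_one.2 (Nat.zero_lt_of_lt hN)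
      obtain ⟨t, hst, hta⟩ := hsa.exists_head
      exact ⟨t, hst, N, Nat.le_of_succ_le_succ hN, a, hta, ha⟩
    obtain ⟨t, hst, ht⟩ := exists_mem_frequently (l := atTop) (hr s) exists_child
    refine ⟨⟨t, frequently_atTop.2 fun M => ?_⟩, hst⟩
    obtain ⟨M', hM', N, hN, ha⟩ := frequently_atTop.1 ht M
    exact ⟨N, hM'.trans hN, ha⟩
  choose next hnext using exists_next
  let d (n : ℕ) : {s // IsDeep s} := next^[n] ⟨s, h⟩
  refine ⟨fun i => d i, rfl, fun i => ?_, fun i => (d i).2⟩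
  simpa only [d, Function.iterate_succ_apply'] using hnext (d i)

variable {U B : Type} {F : Forest U B} {SU : Set U} {SB : Set B} {V : Ultrafilter ℕ}

theorem exists_globalKBisim_of_gf2Entails {A : Str U B} {φ₁ φ₂ : Fml U B} (hSU : SU.Finite)
    (hSB : SB.Finite) (h : GF2Entails SU SB φ₁ φ₂) (hA : SatS A φ₁) (k : ℕ) :
    ∃ M : Str U B, SatS M φ₂ ∧ GlobalKBisim A M SU SB k := by
  obtain ⟨χ, hχ, hAχ, hchar⟩ := exists_characteristic_sentence hSU hSB A k
  obtain ⟨hgf, hsent, hu, hb⟩ := hχ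
  by_contra! hn
  have hneg : Entails φ₂ χ.neg := fun M hM =>
    (satS_neg_iff hsent).2 fun hMχ => hn M hM (hchar M hMχ)
  exact (satS_neg_iff hsent).1 (h χ.neg ⟨.neg hgf, hsent, hu, hb⟩ hneg A hA) hAχ

namespace Forest

theorem exists_eventually_isSubtreeIso {S : Set F.Dom} (hS : S.Finite)
    (hrep : ∀ c, ∃ s ∈ S, F.SubtreeIso s c) (hF : FiniteOutdeg F.toStr) {K : Set ℕ} (hK : K.Finite)
    {Q : F.Dom → Prop} {a : ℕ → F.Dom}
    (h : ∀ᶠ n in V, ∃ c, Q c ∧ ∃ m ∈ K, Steps (F.SigParent SB) m c (a n)) :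
    ∃ s ∈ S, ∃ x : F.desc s, (∃ m ∈ K, Steps (F.SigParent SB) m s x) ∧
      ∀ᶠ n in V, ∃ c, Q c ∧ ∃ f : F.desc s ≃ F.desc c, IsSubtreeIso f ∧ (f x).val = a n := by
  have hfin (s : F.Dom) : {x : F.desc s | ∃ m ∈ K, Steps (F.SigParent SB) m s x}.Finite := by
    have hlevels := hK.biUnion fun m _ =>
      Steps.finite_setOf (F.finite_setOf_sigParent (SB := SB) hF) m s
    refine (hlevels.preimage Subtype.val_injective.injOn).subset ?_
    rintro x ⟨m, hm, hx⟩
    exact Set.mem_biUnion hm hx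
  have hcopy : ∀ᶠ n in V, ∃ s ∈ S, ∃ x ∈ {x : F.desc s | ∃ m ∈ K, Steps (F.SigParent SB) m s x},
      ∃ c, Q c ∧ ∃ f : F.desc s ≃ F.desc c, IsSubtreeIso f ∧ (f x).val = a n := by
    filter_upwards [h] with n ⟨c, hc, m, hm, hca⟩
    obtain ⟨s, hs, hsc⟩ := hrep c
    obtain ⟨f, hf⟩ := subtreeIso_iff.1 hsc
    obtain ⟨x, hx, hsx⟩ := hf.exists_steps hca
    exact ⟨s, hs, x, ⟨m, hm, hsx⟩, c, hc, f, hf, hx⟩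
  obtain ⟨s, hs, hcopy⟩ := (Ultrafilter.eventually_exists_mem_iff hS).1 hcopy
  obtain ⟨x, hx, hcopy⟩ := (Ultrafilter.eventually_exists_mem_iff (hfin s)).1 hcopy
  exact ⟨s, hs, x, hx, hcopy⟩

end Forest

section

variable {C : ℕ → Str U B}

theorem exists_bisim_ultraproduct {A : Str U B} (hV : (V : Filter ℕ) ≤ atTop)
    (hA : FiniteOutdeg A) (hC : ∀ n, GlobalKBisim A (C n) SU SB n) (a : A.Dom) :
    ∃ q, Bisim A (ultraproduct V C) SU SB a q := by
  obtain ⟨q, hq⟩ := exists_eventually_rep (V := V) (.of_forall fun n => (hC n).exists_right a)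
  refine ⟨q, LimitBisim.bisim hV hA fun k => ?_⟩
  filter_upwards [hq, hV (eventually_ge_atTop k)] with n hn hk
  exact kDelimBisim_empty_iff.2 (hn.mono hk)

variable {a : ℕ → F.Dom} {q : (ultraproduct V C).Dom} {S : Set F.Dom}

theorem exists_bisim_of_eventually_not_exists_steps (hV : (V : Filter ℕ) ≤ atTop)
    (hF : FiniteOutdeg F.toStr) (hS : S.Finite) (hrep : ∀ c, ∃ s ∈ S, F.SubtreeIso s c)
    (ha : ∀ n, KBisim F.toStr (C n) SU SB n (a n) (rep q n)) {N : ℕ}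
    (hN : ∀ᶠ n in V, ¬ ∃ c, Steps (F.SigParent SB) N c (a n)) :
    ∃ a, Bisim F.toStr (ultraproduct V C) SU SB a q := by
  have hroot : ∀ᶠ n in V, ∃ c, (∀ p, ¬ F.SigParent SB p c) ∧
      ∃ m ∈ Set.Iio N, Steps (F.SigParent SB) m c (a n) :=
    hN.mono fun n hn => (Steps.exists_root_of_not_exists hn).imp fun c => And.symm
  obtain ⟨s, -, x, -, hiso⟩ :=
    F.exists_eventually_isSubtreeIso hS hrep hF (Set.finite_Iio N) hroot
  obtain ⟨n₁, c₁, hc₁, f₁, hf₁, hx₁⟩ := hiso.exists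
  refine ⟨a n₁, LimitBisim.bisim hV hF fun k => ?_⟩
  filter_upwards [hiso, hV (eventually_ge_atTop k)] with n ⟨c, hc, f, hf, hx⟩ hk
  have hx' : ((f₁.symm.trans f) (f₁ x)).val = a n := by
    rw [Equiv.trans_apply, f₁.symm_apply_apply, hx]
  have hkb : KBisim F.toStr (C n) SU SB k ((f₁.symm.trans f) (f₁ x)).val (rep q n) :=
    hx' ▸ (ha n).mono hk
  exact hx₁ ▸ (hf₁.symm.trans hf).kDelimBisim (.inr ⟨hc₁, hc⟩) hkb

theorem exists_steps_limitBisim_of_eventually_exists_steps (hV : (V : Filter ℕ) ≤ atTop)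
    (hF : FiniteOutdeg F.toStr) (hS : S.Finite) (hrep : ∀ c, ∃ s ∈ S, F.SubtreeIso s c)
    (ha : ∀ n, KBisim F.toStr (C n) SU SB n (a n) (rep q n)) {N : ℕ}
    (hN : ∀ᶠ n in V, ∃ c, Steps (F.SigParent SB) N c (a n)) :
    ∃ s ∈ S, ∃ x, Steps (F.SigParent SB) N s x ∧ LimitBisim F.toStr SU SB {s} x q := by
  obtain ⟨s, hs, x, ⟨_, rfl, hsx⟩, hiso⟩ := F.exists_eventually_isSubtreeIso hS hrep hF
    (Set.finite_singleton N) (Q := fun _ => True)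
    (hN.mono fun n ⟨c, hc⟩ => ⟨c, trivial, N, rfl, hc⟩)
  refine ⟨s, hs, x, hsx, fun k => ?_⟩
  filter_upwards [hiso, hV (eventually_ge_atTop k)] with n ⟨c, _, f, hf, hx⟩ hk
  exact hf.kDelimBisim (.inl (Set.mem_singleton s)) (hx ▸ (ha n).mono hk)

theorem hasDelimChain_of_forall_exists_steps_limitBisim (hV : (V : Filter ℕ) ≤ atTop)
    (hF : FiniteOutdeg F.toStr) (hS : S.Finite)
    (h : ∀ N, ∃ s ∈ S, ∃ x, Steps (F.SigParent SB) N s x ∧ LimitBisim F.toStr SU SB {s} x q) :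
    HasDelimChain F (ultraproduct V C) SU SB q := by
  obtain ⟨s, -, hfreq⟩ := exists_mem_frequently (l := atTop) hS h
  obtain ⟨d, rfl, hstep, hdeep⟩ :=
    Steps.exists_path_of_frequently (F.finite_setOf_sigParent hF) hfreq
  have hprec (i : ℕ) : F.prec SB (d i) (d (i + 1)) := F.prec_of_steps_sigParent (.single (hstep i))
  have exists_below (i : ℕ) :
      ∃ x, F.prec SB (d (i + 1)) x ∧ LimitBisim F.toStr SU SB {d 0} x q := by
    obtain ⟨N, hN, x, hx, hlim⟩ := frequently_atTop.1 (hdeep (i + 1)) 1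
    obtain ⟨N, rfl⟩ := Nat.exists_eq_add_one.2 hN
    exact ⟨x, F.prec_of_steps_sigParent hx, hlim⟩
  choose as' has' hlim using exists_below
  exact ⟨d 0, fun i => d (i + 1), as', hprec 0, fun i => hprec (i + 1), has',
    fun i => (hlim i).ptDelimBisim hV hF⟩

theorem isDelimMatch_ultraproduct (hV : (V : Filter ℕ) ≤ atTop) (hreg : F.Regular)
    (hF : FiniteOutdeg F.toStr) (hC : ∀ n, GlobalKBisim F.toStr (C n) SU SB n) :
    IsDelimMatch F (ultraproduct V C) SU SB where
  exists_bisim := exists_bisim_ultraproduct hV hF hC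
  exists_bisim_or_hasDelimChain q := by
    obtain ⟨S, hS, hrep⟩ := hreg
    choose a ha using fun n => (hC n).exists_left (rep q n)
    by_cases hN : ∃ N, ∀ᶠ n in V, ¬ ∃ c, Steps (F.SigParent SB) N c (a n)
    · obtain ⟨N, hN⟩ := hN
      exact .inl (exists_bisim_of_eventually_not_exists_steps hV hF hS hrep ha hN)
    · simp only [Ultrafilter.eventually_not, not_exists_not] at hN
      exact .inr (hasDelimChain_of_forall_exists_steps_limitBisim hV hF hS fun N =>
        exists_steps_limitBisim_of_eventually_exists_steps hV hF hS hrep ha (hN N))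

end

theorem exists_isDelimMatch_of_gf2Entails {φ₁ φ₂ : Fml U B} (hSU : SU.Finite) (hSB : SB.Finite)
    (h : GF2Entails SU SB φ₁ φ₂) (hF₁ : SatS F.toStr φ₁) (hreg : F.Regular)
    (hF : FiniteOutdeg F.toStr) : ∃ M : Str U B, SatS M φ₂ ∧ IsDelimMatch F M SU SB := by
  choose C hsat hC using exists_globalKBisim_of_gf2Entails hSU hSB h hF₁
  exact ⟨ultraproduct (hyperfilter ℕ) C, ultraproduct.satS hsat,
    isDelimMatch_ultraproduct Nat.hyperfilter_le_atTop hreg hF hC⟩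

end

theorem gf2_entails_iff_delimited_bisimulation_characterization_general {U B : Type}
    (φ₁ φ₂ : Fml U B) (SU : Set U) (SB : Set B) (hSU : SU.Finite) (hSB : SB.Finite)
    (h1 : IsGF2 φ₁) (h1s : φ₁.IsSentence) :
    GF2Entails SU SB φ₁ φ₂ ↔
      ∀ F : Forest U B, SatS F.toStr φ₁ → F.Regular → FiniteOutdeg F.toStr →
        ∃ M : Str U B, SatS M φ₂ ∧ IsDelimMatch F M SU SB :=
  ⟨fun h _ => exists_isDelimMatch_of_gf2Entails hSU hSB h,
    gf2Entails_of_forall_exists_isDelimMatch h1 h1s⟩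

/-- Theorem charsimp-precursor: `φ₁ ⊨_Σ φ₂` iff for every
regular forest model `𝔄` of `φ₁` of finite outdegree there is a model `𝔅` of
`φ₂` such that (1) every `a` is GF²(Σ)-bisimilar to some `b`, and (2) for every
`b` either (a) some `a` is GF²(Σ)-bisimilar to `b`, or (b) there are
`a_⊥ ≺ a₀ ≺ a₁ ≺ ⋯` and `a'₀, a'₁, …` with `a_i ≺ a'_i` and
`(𝔄,a'_i) ∼^{a_⊥}_Σ (𝔅,b)` for all `i`. -/
theorem gf2_entails_iff_delimited_bisimulation_characterization
    {U B : Type} (φ₁ φ₂ : Fml U B) (SU : Set U) (SB : Set B)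
    (hSU : SU.Finite) (hSB : SB.Finite)
    (h1 : IsGF2 φ₁) (h1s : φ₁.IsSentence)
    (h2 : IsGF2 φ₂) (h2s : φ₂.IsSentence) :
    GF2Entails SU SB φ₁ φ₂ ↔
    (∀ F : Forest U B, SatS F.toStr φ₁ → F.Regular → FiniteOutdeg F.toStr →
      ∃ Bm : Str U B, SatS Bm φ₂ ∧
        (∀ a, ∃ b, Bisim F.toStr Bm SU SB a b) ∧
        (∀ b : Bm.Dom,
          (∃ a, Bisim F.toStr Bm SU SB a b) ∨
          (∃ (abot : F.Dom) (as as' : ℕ → F.Dom),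
            F.prec SB abot (as 0) ∧
            (∀ i, F.prec SB (as i) (as (i+1))) ∧
            (∀ i, F.prec SB (as i) (as' i)) ∧
            (∀ i, PtDelimBisim F.toStr Bm SU SB abot (as' i) b)))) := by
  simpa only [isDelimMatch_iff, HasDelimChain] using
    gf2_entails_iff_delimited_bisimulation_characterization_general φ₁ φ₂ SU SB hSU hSB h1 h1s

end GFC
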